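/- arXiv:2407.06181 — 13 statements merged into one kernel-verified Lean document; each statement's English description precedes it below -/
import Mathlib

section
/- Let A be a class of arrows of a category X that is stable under pushouts and contains all isomorphisms. If a commutative square with sides m : A → C, g : A → B, f : C → D, n : B → D is an A-Van Kampen square and m is a monomorphism belonging to A, then the square is a pullback and n is a monomorphism. -/
open CategoryTheory CategoryTheory.Limits

universe v u

variable {C : Type u} [Category.{v} C]

/-- A commutative square (a pushout square) is an `A`-Van Kampen square if for every
commutative cube having it as bottom face, whose back and left faces are pullbacks and
whose four vertical arrows lie in `A`, the top face is a pushout if and only if the front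
and right faces are pullbacks.  The square has top side `f`, left side `m`, right side `n`
and bottom side `g`. -/
def IsVanKampenSquareFor (A : MorphismProperty C) {X₁ X₂ X₃ X₄ : C}
    (f : X₁ ⟶ X₂) (m : X₁ ⟶ X₃) (n : X₂ ⟶ X₄) (g : X₃ ⟶ X₄) : Prop :=
  IsPushout f m n g ∧
  ∀ ⦃Y₁ Y₂ Y₃ Y₄ : C⦄ (f' : Y₁ ⟶ Y₂) (m' : Y₁ ⟶ Y₃) (n' : Y₂ ⟶ Y₄) (g' : Y₃ ⟶ Y₄)
    (a : Y₁ ⟶ X₁) (b : Y₂ ⟶ X₂) (c : Y₃ ⟶ X₃) (d : Y₄ ⟶ X₄),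
    f' ≫ n' = m' ≫ g' → g' ≫ d = c ≫ g → n' ≫ d = b ≫ n →
    IsPullback f' a b f → IsPullback m' a c m →
    A a → A b → A c → A d →
    (IsPushout f' m' n' g' ↔ (IsPullback g' c d g ∧ IsPullback n' b d n))

/-- If `A` is a class of arrows stable under pushouts and containing all isomorphisms, and
the square with top `g : A ⟶ B`, left `m : A ⟶ C`, right `n : B ⟶ D` and bottom
`f : C ⟶ D` is an `A`-Van Kampen square with `m` a monomorphism in `A`, then the square is
a pullback and `n` is a monomorphism. -/
theorem vanKampen_square_is_pullback_and_mono
    (A : MorphismProperty C)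
    (hstable : ∀ ⦃W X Y Z : C⦄ (f : W ⟶ X) (m : W ⟶ Y) (n : X ⟶ Z) (g : Y ⟶ Z),
      IsPushout f m n g → A m → A n)
    (hiso : ∀ ⦃X Y : C⦄ (f : X ⟶ Y), IsIso f → A f)
    {A₀ B₀ C₀ D₀ : C} (g : A₀ ⟶ B₀) (m : A₀ ⟶ C₀) (n : B₀ ⟶ D₀) (f : C₀ ⟶ D₀)
    (hvk : IsVanKampenSquareFor A g m n f) (hm : A m) (hmono : Mono m) :
    IsPullback g m n f ∧ Mono n := by
  have hn : A n := hstable g m n f hvk.1 hm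
  -- The cube whose top face is `g` with identities on `A₀` and `B₀`; its front face is the
  -- given square, its left and right faces are the kernel-pair squares of `m` and `n`.
  obtain ⟨hfront, hright⟩ :=
    (hvk.2 g (𝟙 A₀) (𝟙 B₀) g (𝟙 A₀) (𝟙 B₀) m n (by simp) hvk.1.w rfl
      (IsPullback.of_vert_isIso ⟨by simp⟩) (IsKernelPair.id_of_mono m)
      (hiso _ inferInstance) (hiso _ inferInstance) hm hn).1
      (IsPushout.of_vert_isIso ⟨by simp⟩)
  refine ⟨hfront, ⟨fun x y h => ?_⟩⟩
  -- A competing pair for the pullback of `n` along itself factors through the diagonal.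
  have h₁ := hright.lift_fst x y h
  have h₂ := hright.lift_snd x y h
  exact h₁.symm.trans h₂
end

section
/- In an M-adhesive category X, every pushout square along an arrow of M is also a pullback square. -/
open CategoryTheory CategoryTheory.Limits

universe w v u

variable {C : Type u} [Category.{v} C]

/-- An `M`-adhesive category: `M` is a class of monomorphisms containing all isomorphisms,
closed under composition, stable under pullbacks and pushouts; the category has pullbacks
and pushouts along arrows of `M`, and pushouts along arrows of `M` are `M`-Van Kampen
squares. -/
structure IsMAdhesive (M : MorphismProperty C) : Prop where
  mono : ∀ ⦃X Y : C⦄ (f : X ⟶ Y), M f → Mono f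
  contains_iso : ∀ ⦃X Y : C⦄ (f : X ⟶ Y), IsIso f → M f
  comp_mem : ∀ ⦃X Y Z : C⦄ (f : X ⟶ Y) (g : Y ⟶ Z), M f → M g → M (f ≫ g)
  pullback_stable : ∀ ⦃W X Y Z : C⦄ (f : W ⟶ X) (m : W ⟶ Y) (n : X ⟶ Z) (g : Y ⟶ Z),
    IsPullback f m n g → M n → M m
  pushout_stable : ∀ ⦃W X Y Z : C⦄ (f : W ⟶ X) (m : W ⟶ Y) (n : X ⟶ Z) (g : Y ⟶ Z),
    IsPushout f m n g → M m → M n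
  has_pullback : ∀ ⦃X Y Z : C⦄ (f : X ⟶ Z) (m : Y ⟶ Z), M m → HasPullback f m
  has_pushout : ∀ ⦃X Y Z : C⦄ (m : X ⟶ Y) (f : X ⟶ Z), M m → HasPushout m f
  van_kampen : ∀ ⦃W X Y Z : C⦄ (f : W ⟶ X) (m : W ⟶ Y) (n : X ⟶ Z) (g : Y ⟶ Z),
    IsPushout f m n g → M m → IsVanKampenSquareFor M f m n g

/-- In an `M`-adhesive category, every pushout square along an arrow of `M`
(left side `m ∈ M`) is also a pullback square. -/
theorem pushout_along_M_is_pullback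
    (M : MorphismProperty C) (hadh : IsMAdhesive M)
    {W X Y Z : C} (f : W ⟶ X) (m : W ⟶ Y) (n : X ⟶ Z) (g : Y ⟶ Z)
    (hm : M m) (hpo : IsPushout f m n g) :
    IsPullback f m n g := by
  have : Mono m := hadh.mono m hm
  have hid : ∀ T : C, M (𝟙 T) := fun T => hadh.contains_iso (𝟙 T) inferInstance
  -- Van Kampen property for the cube with top face `f, 𝟙 W, 𝟙 X, f` and verticals
  -- `𝟙 W, 𝟙 X, m, n`; its left face is the kernel pair of the monomorphism `m`, and its
  -- front face is the given square.
  exact (((hadh.van_kampen f m n g hpo hm).2 f (𝟙 W) (𝟙 X) f (𝟙 W) (𝟙 X) m n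
    (by simp) hpo.w (by simp)
    (IsPullback.of_vert_isIso ⟨by simp⟩) (IsKernelPair.id_of_mono m)
    (hid W) (hid X) hm (hadh.pushout_stable f m n g hpo hm)).1
    (IsPushout.of_vert_isIso ⟨by simp⟩)).1
end

section
/- In an M-adhesive category X, every arrow belonging to M is a regular monomorphism. -/
/-!
Let `n, g : Y ⟶ Z` be the pushout of `m` along itself. Both lie in `M`, and `m` is their equalizer
as soon as the pushout square is also a pullback, since a map `k` with `k ≫ n = k ≫ g` is exactly a
cone over `n` and `g` with equal legs. That the square is a pullback follows from the Van Kampen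
property, applied to the cube whose top face is the trivial pushout of `m` along `𝟙 X`, with vertical
arrows `𝟙 X`, `m`, `𝟙 Y` and `g`: its right face is the square in question. The back face is
a pullback because `m` is a monomorphism.
-/

open CategoryTheory CategoryTheory.Limits

universe w v u

variable {C : Type u} [Category.{v} C]

/-- In an `M`-adhesive category, every arrow belonging to `M` is a regular monomorphism. -/
theorem M_arrow_is_regularMono
    (M : MorphismProperty C) (hadh : IsMAdhesive M)
    {X Y : C} (m : X ⟶ Y) (hm : M m) :
    Nonempty (RegularMono m) := by
  haveI := hadh.mono m hm
  haveI := hadh.has_pushout m m hm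
  have hpo : IsPushout m m (pushout.inl m m) (pushout.inr m m) := IsPushout.of_hasPushout m m
  have hg : M (pushout.inr m m) := hadh.pushout_stable _ _ _ _ hpo.flip hm
  have hX : M (𝟙 X) := hadh.contains_iso _ inferInstance
  have hY : M (𝟙 Y) := hadh.contains_iso _ inferInstance
  have hpb : IsPullback m m (pushout.inr m m) (pushout.inl m m) :=
    (((hadh.van_kampen _ _ _ _ hpo hm).2 (𝟙 X) m m (𝟙 Y) (𝟙 X) m (𝟙 Y) (pushout.inr m m)
      (by simp) (by simp) hpo.w.symm
      (IsKernelPair.id_of_mono m) (IsPullback.of_vert_isIso ⟨by simp⟩) hX hm hY hg).1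
      (IsPushout.of_horiz_isIso ⟨by simp⟩)).2
  exact ⟨{
    Z := pushout m m
    left := pushout.inr m m
    right := pushout.inl m m
    w := hpb.w
    isLimit := Fork.IsLimit.mk _
      (fun s => hpb.lift s.ι s.ι s.condition)
      (fun s => hpb.lift_fst _ _ _)
      (fun s l hl => by
        rw [← cancel_mono m]
        exact hl.trans (hpb.lift_fst _ _ _).symm) }⟩
end

section
/- (Uniqueness of pushout complements) Let X be an M-adhesive category, m : X → Y an arrow of M and f : Y → Z any arrow. If (h1 : X → W1, k1 : W1 → Z) and (h2 : X → W2, k2 : W2 → Z) are both pushout complements of the pair (m, f), i.e. both squares f∘m = k1∘h1 and f∘m = k2∘h2 are pushouts with k1, k2 ∈ M, then there exists a unique isomorphism φ : W1 → W2 such that φ∘h1 = h2 and k2∘φ = k1. -/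
/-!
The idea is to compare both complements with the pullback `P` of `k₁` and `k₂`. Pulling the first
pushout square back along `k₂` yields a cube whose vertical arrows all lie in `M`: a pushout along
an arrow of `M` is also a pullback (`IsMAdhesive.isPullback_of_isPushout`), so the pullback of `Y`
along `k₂` is `X`, and hence so are both pullbacks over `X`. The Van Kampen property makes the top
face `X ⟶ X`, `X ⟶ P`, `X ⟶ W₂`, `P ⟶ W₂` a pushout whose first side is the identity, so `P ⟶ W₂`
is an isomorphism (`IsMAdhesive.isIso_of_isPullback`). By symmetry `P ⟶ W₁` is one too, and
`W₁ ≅ P ≅ W₂` is the required isomorphism. Uniqueness holds because `k₂` is a monomorphism.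
-/

open CategoryTheory CategoryTheory.Limits

universe w v u

variable {C : Type u} [Category.{v} C]

/-- In an `M`-adhesive category a pushout along an arrow of `M` is also a pullback. This is the
Van Kampen property for the cube whose top face is the trivial pushout on `h` and identities. -/
theorem IsMAdhesive.isPullback_of_isPushout {M : MorphismProperty C} (hadh : IsMAdhesive M)
    {X Y Z W : C} {m : X ⟶ Y} {f : Y ⟶ Z} {h : X ⟶ W} {k : W ⟶ Z} (hm : M m)
    (hpo : IsPushout m h f k) : IsPullback h m k f := by
  have : Mono m := hadh.mono m hm
  exact ((hadh.van_kampen h m k f hpo.flip hm).2 h (𝟙 X) (𝟙 W) h (𝟙 X) (𝟙 W) m k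
    (by simp) hpo.w.symm (by simp) (IsPullback.of_vert_isIso ⟨by simp⟩) (IsKernelPair.id_of_mono m)
    (hadh.contains_iso _ inferInstance) (hadh.contains_iso _ inferInstance) hm
    (hadh.pushout_stable _ _ _ _ hpo.flip hm)).1 (IsPushout.of_vert_isIso ⟨by simp⟩) |>.1

/-- A projection from the pullback of two pushout complements is an isomorphism. -/
theorem IsMAdhesive.isIso_of_isPullback {M : MorphismProperty C} (hadh : IsMAdhesive M)
    {X Y Z W₁ W₂ P : C} {m : X ⟶ Y} {f : Y ⟶ Z} (hm : M m)
    {h₁ : X ⟶ W₁} {k₁ : W₁ ⟶ Z} {h₂ : X ⟶ W₂} {k₂ : W₂ ⟶ Z} (hk₂ : M k₂)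
    (hpo₁ : IsPushout m h₁ f k₁) (hpo₂ : IsPushout m h₂ f k₂)
    {p₁ : P ⟶ W₁} {p₂ : P ⟶ W₂} (hP : IsPullback p₂ p₁ k₂ k₁) : IsIso p₂ := by
  have : Mono m := hadh.mono m hm
  have hpb := hadh.isPullback_of_isPushout hm hpo₂
  obtain ⟨l, hl₂, hl₁⟩ : ∃ l : X ⟶ P, l ≫ p₂ = h₂ ∧ l ≫ p₁ = h₁ :=
    ⟨hP.lift h₂ h₁ (hpo₂.w.symm.trans hpo₁.w), by simp, by simp⟩
  -- Over `X`, the pullback of `k₂` along `m ≫ f = h₁ ≫ k₁` is the identity, computed through `Y`;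
  -- cancelling `hP` identifies the pullback of `p₁` along `h₁`.
  have houter : IsPullback (l ≫ p₂) (𝟙 X) k₂ (h₁ ≫ k₁) := by
    have h := (IsKernelPair.id_of_mono m).paste_horiz hpb
    rwa [Category.id_comp, ← hl₂, hpo₁.w] at h
  have hleft : IsPullback l (𝟙 X) p₁ h₁ := IsPullback.of_right houter (by simp [hl₁]) hP
  have htop : IsPushout l (𝟙 X) p₂ h₂ :=
    ((hadh.van_kampen h₁ m k₁ f hpo₁.flip hm).2 l (𝟙 X) p₂ h₂ (𝟙 X) p₁ m k₂
      (by simp [hl₂]) hpb.w hP.w hleft (IsKernelPair.id_of_mono m)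
      (hadh.contains_iso _ inferInstance) (hadh.pullback_stable _ _ _ _ hP hk₂) hm hk₂).2 ⟨hpb, hP⟩
  exact htop.flip.isIso_inr_of_isIso

/-- Uniqueness of pushout complements.  In an `M`-adhesive category, given `m : X ⟶ Y`
in `M` and `f : Y ⟶ Z`, if `(h₁ : X ⟶ W₁, k₁ : W₁ ⟶ Z)` and `(h₂ : X ⟶ W₂, k₂ : W₂ ⟶ Z)`
are both pushout complements of `(m, f)` with `k₁, k₂ ∈ M`, then there exists a unique
isomorphism `φ : W₁ ⟶ W₂` with `φ ∘ h₁ = h₂` and `k₂ ∘ φ = k₁`. -/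
theorem pushout_complement_unique
    (M : MorphismProperty C) (hadh : IsMAdhesive M)
    {X Y Z W₁ W₂ : C} (m : X ⟶ Y) (f : Y ⟶ Z)
    (hm : M m)
    (h₁ : X ⟶ W₁) (k₁ : W₁ ⟶ Z) (h₂ : X ⟶ W₂) (k₂ : W₂ ⟶ Z)
    (hk₁ : M k₁) (hk₂ : M k₂)
    (hpo₁ : IsPushout m h₁ f k₁) (hpo₂ : IsPushout m h₂ f k₂) :
    ∃! φ : W₁ ⟶ W₂, IsIso φ ∧ h₁ ≫ φ = h₂ ∧ φ ≫ k₂ = k₁ := by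
  have := hadh.mono k₂ hk₂
  have := hadh.has_pullback k₁ k₂ hk₂
  have hP := IsPullback.of_hasPullback k₁ k₂
  have i₁ := hadh.isIso_of_isPullback hm hk₁ hpo₂ hpo₁ hP
  have i₂ := hadh.isIso_of_isPullback hm hk₂ hpo₁ hpo₂ hP.flip
  have hk : (inv (pullback.fst k₁ k₂) ≫ pullback.snd k₁ k₂) ≫ k₂ = k₁ := by
    rw [Category.assoc, ← hP.w, IsIso.inv_hom_id_assoc]
  refine ⟨inv (pullback.fst k₁ k₂) ≫ pullback.snd k₁ k₂, ⟨inferInstance, ?_, hk⟩, ?_⟩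
  · rw [← cancel_mono k₂, Category.assoc, hk, ← hpo₁.w, hpo₂.w]
  · rintro ψ ⟨-, -, hψ⟩
    rw [← cancel_mono k₂, hψ, hk]
end

section
/- Let X be an M-adhesive category. Then: (1) for every object Z of X, the slice category X/Z is M/Z-adhesive, where M/Z is the class of arrows of X/Z whose underlying arrow in X lies in M; (2) for every object Z of X, the coslice category Z/X is Z/M-adhesive, where Z/M is the class of arrows of Z/X whose underlying arrow in X lies in M; (3) for every small category Y, the functor category X^Y is M^Y-adhesive, where M^Y is the class of natural transformations all of whose components lie in M. -/
/-!
All three parts are instances of one transfer principle, `IsMAdhesive.of_family`. Given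
functors `F i : D ⥤ C` that are jointly faithful and jointly conservative, and given the
pullbacks and pushouts in `D` along arrows lying componentwise in `M`, preserved by each `F i`,
the class of these arrows makes `D` adhesive. The point is that preservation together with joint
conservativity makes a commutative square whose leg is in the class a pullback (pushout) exactly
when each of its images is, so every axiom can be checked componentwise. In the Van Kampen axiom
no other limits occur: all vertical arrows of the cube are in the class, and the left leg of the
top face is in it because the left face is a pullback.

The principle applies to the forgetful functor of a slice category, since it creates colimits and
connected limits, to that of a coslice category, since it creates limits and connected colimits,
and to the family of evaluation functors on a functor category, where limits and colimits are
computed pointwise; pointwise existence is only needed for the diagrams at hand.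
-/

open CategoryTheory CategoryTheory.Limits

universe w v u

variable {C : Type u} [Category.{v} C]

/-- The class `M/Z` of arrows of the slice category `X/Z` whose underlying arrow lies
in `M`. -/
def sliceProp (M : MorphismProperty C) (Z : C) : MorphismProperty (Over Z) :=
  fun _ _ f => M f.left

/-- The class `Z/M` of arrows of the coslice category `Z/X` whose underlying arrow lies
in `M`. -/
def cosliceProp (M : MorphismProperty C) (Z : C) : MorphismProperty (Under Z) :=
  fun _ _ f => M f.right

/-- The class `M^Y` of natural transformations all of whose components lie in `M`. -/
def functorProp (M : MorphismProperty C) (Y : Type w) [SmallCategory Y] :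
    MorphismProperty (Y ⥤ C) :=
  fun _ _ η => ∀ y : Y, M (η.app y)

section Transfer

variable {D : Type*} [Category* D] {ι : Type*} (F : ι → D ⥤ C)

/-- Jointly faithful and conservative functors preserving a pullback that exists detect it. -/
theorem isPullback_iff_forall_map
    (hfaith : ∀ ⦃X Y : D⦄ (f g : X ⟶ Y), (∀ i, (F i).map f = (F i).map g) → f = g)
    (hiso : ∀ ⦃X Y : D⦄ (f : X ⟶ Y), (∀ i, IsIso ((F i).map f)) → IsIso f)
    {W X Y Z : D} (f : W ⟶ X) (m : W ⟶ Y) (n : X ⟶ Z) (g : Y ⟶ Z)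
    [HasPullback n g] [∀ i, PreservesLimit (cospan n g) (F i)] :
    IsPullback f m n g ↔
      ∀ i, IsPullback ((F i).map f) ((F i).map m) ((F i).map n) ((F i).map g) := by
  refine ⟨fun h i => h.map (F i), fun h => ?_⟩
  have w : f ≫ n = m ≫ g := hfaith _ _ fun i => by simpa using (h i).w
  have hP := IsPullback.of_hasPullback n g
  have : IsIso (hP.lift f m w) := hiso _ fun i => by
    have e : (F i).map (hP.lift f m w) =
        ((h i).isoIsPullback _ _ (hP.map (F i))).hom := by
      apply (hP.map (F i)).hom_ext <;> simp [← Functor.map_comp]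
    rw [e]
    infer_instance
  exact IsPullback.of_iso_pullback ⟨w⟩ (asIso (hP.lift f m w)) (by simp) (by simp)

/-- Jointly faithful and conservative functors preserving a pushout that exists detect it. -/
theorem isPushout_iff_forall_map
    (hfaith : ∀ ⦃X Y : D⦄ (f g : X ⟶ Y), (∀ i, (F i).map f = (F i).map g) → f = g)
    (hiso : ∀ ⦃X Y : D⦄ (f : X ⟶ Y), (∀ i, IsIso ((F i).map f)) → IsIso f)
    {W X Y Z : D} (f : W ⟶ X) (m : W ⟶ Y) (n : X ⟶ Z) (g : Y ⟶ Z)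
    [HasPushout f m] [∀ i, PreservesColimit (span f m) (F i)] :
    IsPushout f m n g ↔
      ∀ i, IsPushout ((F i).map f) ((F i).map m) ((F i).map n) ((F i).map g) := by
  refine ⟨fun h i => h.map (F i), fun h => ?_⟩
  have w : f ≫ n = m ≫ g := hfaith _ _ fun i => by simpa using (h i).w
  have hP := IsPushout.of_hasPushout f m
  have : IsIso (hP.desc n g w) := hiso _ fun i => by
    have e : (F i).map (hP.desc n g w) =
        ((hP.map (F i)).isoIsPushout _ _ (h i)).hom := by
      apply (hP.map (F i)).hom_ext <;> simp [← Functor.map_comp]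
    rw [e]
    infer_instance
  exact IsPushout.of_iso_pushout ⟨w⟩ (asIso (hP.desc n g w)).symm (by simp) (by simp)

/-- `M`-adhesivity transfers along a jointly faithful and jointly conservative family of functors,
provided that pullbacks and pushouts along the arrows lying componentwise in `M` exist and are
preserved. -/
theorem IsMAdhesive.of_family {M : MorphismProperty C} (hadh : IsMAdhesive M)
    {N : MorphismProperty D}
    (hN : ∀ ⦃X Y : D⦄ (f : X ⟶ Y), N f ↔ ∀ i, M ((F i).map f))
    (hfaith : ∀ ⦃X Y : D⦄ (f g : X ⟶ Y), (∀ i, (F i).map f = (F i).map g) → f = g)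
    (hiso : ∀ ⦃X Y : D⦄ (f : X ⟶ Y), (∀ i, IsIso ((F i).map f)) → IsIso f)
    (hpb : ∀ ⦃X Y Z : D⦄ (f : X ⟶ Z) (m : Y ⟶ Z), N m →
      HasPullback f m ∧ ∀ i, PreservesLimit (cospan f m) (F i))
    (hpo : ∀ ⦃X Y Z : D⦄ (m : X ⟶ Y) (f : X ⟶ Z), N m →
      HasPushout m f ∧ ∀ i, PreservesColimit (span m f) (F i)) :
    IsMAdhesive N := by
  have pb : ∀ ⦃W X Y Z : D⦄ (f : W ⟶ X) (m : W ⟶ Y) (n : X ⟶ Z) (g : Y ⟶ Z), N n →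
      (IsPullback f m n g ↔
        ∀ i, IsPullback ((F i).map f) ((F i).map m) ((F i).map n) ((F i).map g)) := by
    intro W X Y Z f m n g hn
    obtain ⟨_, _⟩ := hpb g n hn
    rw [IsPullback.flip_iff, isPullback_iff_forall_map F hfaith hiso]
    exact forall_congr' fun i => IsPullback.flip_iff
  have pb' : ∀ ⦃W X Y Z : D⦄ (f : W ⟶ X) (m : W ⟶ Y) (n : X ⟶ Z) (g : Y ⟶ Z), N g →
      (IsPullback f m n g ↔
        ∀ i, IsPullback ((F i).map f) ((F i).map m) ((F i).map n) ((F i).map g)) := by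
    intro W X Y Z f m n g hg
    obtain ⟨_, _⟩ := hpb n g hg
    exact isPullback_iff_forall_map F hfaith hiso f m n g
  have po : ∀ ⦃W X Y Z : D⦄ (f : W ⟶ X) (m : W ⟶ Y) (n : X ⟶ Z) (g : Y ⟶ Z), N m →
      (IsPushout f m n g ↔
        ∀ i, IsPushout ((F i).map f) ((F i).map m) ((F i).map n) ((F i).map g)) := by
    intro W X Y Z f m n g hm
    obtain ⟨_, _⟩ := hpo m f hm
    rw [IsPushout.flip_iff, isPushout_iff_forall_map F hfaith hiso]
    exact forall_congr' fun i => IsPushout.flip_iff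
  have pbs : ∀ ⦃W X Y Z : D⦄ (f : W ⟶ X) (m : W ⟶ Y) (n : X ⟶ Z) (g : Y ⟶ Z),
      IsPullback f m n g → N n → N m := fun W X Y Z f m n g h hn =>
    (hN m).2 fun i => hadh.pullback_stable _ _ _ _ ((pb f m n g hn).1 h i) ((hN n).1 hn i)
  refine
    { mono := fun X Y f hf => ⟨fun g h e => hfaith _ _ fun i => ?_⟩
      contains_iso := fun X Y f hf => (hN f).2 fun i => hadh.contains_iso _ inferInstance
      comp_mem := fun X Y Z f g hf hg => (hN _).2 fun i => ?_
      pullback_stable := pbs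
      pushout_stable := fun W X Y Z f m n g h hm =>
        (hN n).2 fun i => hadh.pushout_stable _ _ _ _ ((po f m n g hm).1 h i) ((hN m).1 hm i)
      has_pullback := fun X Y Z f m hm => (hpb f m hm).1
      has_pushout := fun X Y Z m f hm => (hpo m f hm).1
      van_kampen := ?_ }
  · have := hadh.mono _ ((hN f).1 hf i)
    rw [← cancel_mono ((F i).map f), ← Functor.map_comp, e, Functor.map_comp]
  · rw [Functor.map_comp]
    exact hadh.comp_mem _ _ ((hN f).1 hf i) ((hN g).1 hg i)
  · intro W X Y Z f m n g h hm
    refine ⟨h, fun Y₁ Y₂ Y₃ Y₄ f' m' n' g' a b c d h₁ h₂ h₃ hb hl ha hb' hc hd => ?_⟩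
    -- the left leg of the top face is a pullback of `m`
    have hm' : N m' := pbs _ _ _ _ hl.flip hm
    rw [po _ _ _ _ hm', pb _ _ _ _ hd, pb _ _ _ _ hd, ← forall_and]
    refine forall_congr' fun i => ?_
    refine (hadh.van_kampen _ _ _ _ ((po f m n g hm).1 h i) ((hN m).1 hm i)).2
      _ _ _ _ _ _ _ _ ?_ ?_ ?_ ((pb _ _ _ _ hb').1 hb i) ((pb _ _ _ _ hc).1 hl i)
      ((hN a).1 ha i) ((hN b).1 hb' i) ((hN c).1 hc i) ((hN d).1 hd i)
    · simpa using congrArg (F i).map h₁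
    · simpa using congrArg (F i).map h₂
    · simpa using congrArg (F i).map h₃

end Transfer

theorem IsMAdhesive.slice {M : MorphismProperty C} (hadh : IsMAdhesive M) (Z : C) :
    IsMAdhesive (sliceProp M Z) := by
  refine hadh.of_family (fun _ : Unit => Over.forget Z) (fun X Y f => ?_)
    (fun X Y f g h => (Over.forget Z).map_injective (h ())) (fun X Y f h => ?_)
    (fun X Y W f m hm => ?_) (fun X Y W m f hm => ?_)
  · exact ⟨fun h _ => h, fun h => h ()⟩
  · have := h ()
    exact isIso_of_reflects_iso f (Over.forget Z)
  · have : HasPullback ((Over.forget Z).map f) ((Over.forget Z).map m) :=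
      hadh.has_pullback _ _ hm
    have : HasLimit (cospan f m ⋙ Over.forget Z) :=
      hasLimit_of_iso (cospanCompIso (Over.forget Z) f m).symm
    exact ⟨hasLimit_of_created _ (Over.forget Z), fun _ => inferInstance⟩
  · have : HasPushout ((Over.forget Z).map m) ((Over.forget Z).map f) :=
      hadh.has_pushout _ _ hm
    have : HasColimit (span m f ⋙ Over.forget Z) :=
      hasColimit_of_iso (spanCompIso (Over.forget Z) m f)
    exact ⟨hasColimit_of_created _ (Over.forget Z), fun _ => inferInstance⟩

theorem IsMAdhesive.coslice {M : MorphismProperty C} (hadh : IsMAdhesive M) (Z : C) :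
    IsMAdhesive (cosliceProp M Z) := by
  refine hadh.of_family (fun _ : Unit => Under.forget Z) (fun X Y f => ?_)
    (fun X Y f g h => (Under.forget Z).map_injective (h ())) (fun X Y f h => ?_)
    (fun X Y W f m hm => ?_) (fun X Y W m f hm => ?_)
  · exact ⟨fun h _ => h, fun h => h ()⟩
  · have := h ()
    exact isIso_of_reflects_iso f (Under.forget Z)
  · have : HasPullback ((Under.forget Z).map f) ((Under.forget Z).map m) :=
      hadh.has_pullback _ _ hm
    have : HasLimit (cospan f m ⋙ Under.forget Z) :=
      hasLimit_of_iso (cospanCompIso (Under.forget Z) f m).symm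
    exact ⟨hasLimit_of_created _ (Under.forget Z), fun _ => inferInstance⟩
  · have : HasPushout ((Under.forget Z).map m) ((Under.forget Z).map f) :=
      hadh.has_pushout _ _ hm
    have : HasColimit (span m f ⋙ Under.forget Z) :=
      hasColimit_of_iso (spanCompIso (Under.forget Z) m f)
    exact ⟨hasColimit_of_created _ (Under.forget Z), fun _ => inferInstance⟩

theorem IsMAdhesive.functor {M : MorphismProperty C} (hadh : IsMAdhesive M)
    (Y : Type w) [SmallCategory Y] : IsMAdhesive (functorProp M Y) := by
  refine hadh.of_family (fun y : Y => (evaluation Y C).obj y) (fun _ _ f => Iff.rfl)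
    (fun _ _ f g h => NatTrans.ext (funext h)) (fun _ _ f h => ?_)
    (fun A B E f m hm => ?_) (fun A B E m f hm => ?_)
  · exact (NatTrans.isIso_iff_isIso_app f).2 h
  · have (y : Y) : HasLimit ((cospan f m).flip.obj y) := by
      have : HasPullback (((evaluation Y C).obj y).map f) (((evaluation Y C).obj y).map m) :=
        hadh.has_pullback _ _ (hm y)
      exact hasLimit_of_iso (cospanCompIso ((evaluation Y C).obj y) f m).symm
    exact ⟨inferInstance, fun _ => inferInstance⟩
  · have (y : Y) : HasColimit ((span m f).flip.obj y) := by
      have : HasPushout (((evaluation Y C).obj y).map m) (((evaluation Y C).obj y).map f) :=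
        hadh.has_pushout _ _ (hm y)
      exact hasColimit_of_iso (spanCompIso ((evaluation Y C).obj y) m f)
    exact ⟨inferInstance, fun _ => inferInstance⟩

/-- If `X` is `M`-adhesive then every slice category `X/Z` is `M/Z`-adhesive, every
coslice category `Z/X` is `Z/M`-adhesive, and for every small category `Y` the functor
category `X^Y` is `M^Y`-adhesive. -/
theorem slice_coslice_functor_adhesive
    (M : MorphismProperty C) (hadh : IsMAdhesive M) :
    (∀ Z : C, IsMAdhesive (sliceProp M Z)) ∧
    (∀ Z : C, IsMAdhesive (cosliceProp M Z)) ∧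
    (∀ (Y : Type w) [SmallCategory Y], IsMAdhesive (functorProp M Y)) := by
  exact ⟨hadh.slice, hadh.coslice, fun Y _ => hadh.functor Y⟩
end

section
/- (Local Church-Rosser) Let (X, R) be a left-linear rewriting system over an M-adhesive category and let (i0, i1) be a strong independence pair between two consecutive direct derivations D0 : G0 ⇒ G1 applying ρ0 and D1 : G1 ⇒ G2 applying ρ1. Then D0 and D1 are switchable: there exists a switch of D0 · D1 along (i0, i1), i.e. a two-step derivation from G0 to G2 applying first ρ1 and then ρ0, with an independence pair satisfying the switch compatibility equations. -/
/-!
Write `P` for the pullback of `g₀` and `f₁`, and `u₀ : K₀ ⟶ P`, `u₁ : K₁ ⟶ P` for the induced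
arrows.  The objects of the switch are obtained by rewriting `P` itself: `Q₀` is the pushout of
`l₀` along `u₀`, `Q₁` the pushout of `r₁` along `u₁`, and `G₁'` the pushout of `Q₀` and `Q₁`
over `P`.  Since `k₀ = u₀ ≫ p₀` and `k₁ = u₁ ≫ p₁`, pushout cancellation exhibits `G₀` as the
pushout of `Q₀` and `D₀` over `P`, and `G₂` as the pushout of `D₁` and `Q₁` over `P`.  Together
with the two pushout squares of the strong independence pair, each of the four squares of the
switched derivation is then a pasting of two pushouts.  The arrows `Q₀ ⟶ G₀` and `Q₁ ⟶ G₁'` lie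
in `M` because they are pushouts of `p₀` (a pullback of `f₁`) and of `P ⟶ Q₀` (a pushout of `l₀`).
Of `M`-adhesivity only the existence and stability of pullbacks and pushouts along `M` matter;
the Van Kampen property plays no role.
-/

open CategoryTheory CategoryTheory.Limits

universe w v u

variable {C : Type u} [Category.{v} C]

/-- A left `M`-linear DPO rewriting rule: a span `L ⟵l⟵ K ⟶r⟶ R` with `l ∈ M`. -/
structure DPORule (M : MorphismProperty C) where
  K : C
  L : C
  R : C
  l : K ⟶ L
  r : K ⟶ R
  hl : M l

/-- A direct derivation from `G` to `H` applying the rule `ρ`: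
a match `m : L ⟶ G`, arrows `k : K ⟶ D`, `f : D ⟶ G` with `f ∈ M`, `g : D ⟶ H`
and co-match `h : R ⟶ H` such that both squares are pushouts. -/
structure DirectDerivation (M : MorphismProperty C) (ρ : DPORule M) (G H : C) where
  D : C
  m : ρ.L ⟶ G
  k : ρ.K ⟶ D
  f : D ⟶ G
  g : D ⟶ H
  h : ρ.R ⟶ H
  hf : M f
  left : IsPushout ρ.l k m f
  right : IsPushout ρ.r k h g

/-- `(i₀, i₁)` is an independence pair between the consecutive direct derivations
`D₀ : G₀ ⇒ G₁` and `D₁ : G₁ ⇒ G₂`. -/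
def IsIndependencePair {M : MorphismProperty C} {ρ₀ ρ₁ : DPORule M} {G₀ G₁ G₂ : C}
    (D₀ : DirectDerivation M ρ₀ G₀ G₁) (D₁ : DirectDerivation M ρ₁ G₁ G₂)
    (i₀ : ρ₀.R ⟶ D₁.D) (i₁ : ρ₁.L ⟶ D₀.D) : Prop :=
  i₀ ≫ D₁.f = D₀.h ∧ i₁ ≫ D₀.g = D₁.m

/-- `(i₀, i₁)` is a strong independence pair: for the pullback `(P, p₀, p₁)` of
`g₀ : D₀ ⟶ G₁` and `f₁ : D₁ ⟶ G₁` with induced arrows `u₀ : K₀ ⟶ P`, `u₁ : K₁ ⟶ P`,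
the squares `(r₀, u₀, p₁, i₀)` and `(l₁, u₁, p₀, i₁)` are pushouts and the pushout of
`r₁` along `u₁` exists. -/
def IsStrongIndependencePair {M : MorphismProperty C} {ρ₀ ρ₁ : DPORule M} {G₀ G₁ G₂ : C}
    (D₀ : DirectDerivation M ρ₀ G₀ G₁) (D₁ : DirectDerivation M ρ₁ G₁ G₂)
    (i₀ : ρ₀.R ⟶ D₁.D) (i₁ : ρ₁.L ⟶ D₀.D) : Prop :=
  IsIndependencePair D₀ D₁ i₀ i₁ ∧
  ∀ ⦃P : C⦄ (p₀ : P ⟶ D₀.D) (p₁ : P ⟶ D₁.D),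
    IsPullback p₀ p₁ D₀.g D₁.f →
    ∀ (u₀ : ρ₀.K ⟶ P) (u₁ : ρ₁.K ⟶ P),
      u₀ ≫ p₀ = D₀.k → u₀ ≫ p₁ = ρ₀.r ≫ i₀ →
      u₁ ≫ p₁ = D₁.k → u₁ ≫ p₀ = ρ₁.l ≫ i₁ →
      IsPushout ρ₀.r u₀ i₀ p₁ ∧ IsPushout ρ₁.l u₁ i₁ p₀ ∧ HasPushout ρ₁.r u₁

/-- `E₀ · E₁` is a switch of `D₀ · D₁` along the independence pair `(i₀, i₁)`:
a two-step derivation between the same endpoints applying the two rules in reverse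
order, together with an independence pair `(i₀', i₁')` satisfying the switch
compatibility equations. -/
def IsSwitch {M : MorphismProperty C} {ρ₀ ρ₁ : DPORule M} {G₀ G₁ G₂ G₁' : C}
    (D₀ : DirectDerivation M ρ₀ G₀ G₁) (D₁ : DirectDerivation M ρ₁ G₁ G₂)
    (i₀ : ρ₀.R ⟶ D₁.D) (i₁ : ρ₁.L ⟶ D₀.D)
    (E₀ : DirectDerivation M ρ₁ G₀ G₁') (E₁ : DirectDerivation M ρ₀ G₁' G₂) : Prop :=
  ∃ (i₀' : ρ₁.R ⟶ E₁.D) (i₁' : ρ₀.L ⟶ E₀.D),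
    IsIndependencePair E₀ E₁ i₀' i₁' ∧
    i₁' ≫ E₀.f = D₀.m ∧
    i₀' ≫ E₁.g = D₁.h ∧
    E₀.m = i₁ ≫ D₀.f ∧
    E₁.h = i₀ ≫ D₁.g

/-- `E₀ · E₁` is a switch of `D₀ · D₁` (along some independence pair). -/
def IsSwitchOf {M : MorphismProperty C} {ρ₀ ρ₁ : DPORule M} {G₀ G₁ G₂ G₁' : C}
    (D₀ : DirectDerivation M ρ₀ G₀ G₁) (D₁ : DirectDerivation M ρ₁ G₁ G₂)
    (E₀ : DirectDerivation M ρ₁ G₀ G₁') (E₁ : DirectDerivation M ρ₀ G₁' G₂) : Prop :=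
  ∃ (i₀ : ρ₀.R ⟶ D₁.D) (i₁ : ρ₁.L ⟶ D₀.D),
    IsIndependencePair D₀ D₁ i₀ i₁ ∧ IsSwitch D₀ D₁ i₀ i₁ E₀ E₁

/-- Two consecutive direct derivations are switchable if a switch of them exists. -/
def Switchable {M : MorphismProperty C} {ρ₀ ρ₁ : DPORule M} {G₀ G₁ G₂ : C}
    (D₀ : DirectDerivation M ρ₀ G₀ G₁) (D₁ : DirectDerivation M ρ₁ G₁ G₂) : Prop :=
  ∃ (G₁' : C) (E₀ : DirectDerivation M ρ₁ G₀ G₁') (E₁ : DirectDerivation M ρ₀ G₁' G₂),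
    IsSwitchOf D₀ D₁ E₀ E₁

/-- A left-linear rewriting system is strong enforcing if every independence pair
between two consecutive direct derivations (applying rules of the system) is strong. -/
def StrongEnforcing (M : MorphismProperty C) (Rs : Set (DPORule M)) : Prop :=
  ∀ ⦃ρ₀ ρ₁ : DPORule M⦄, ρ₀ ∈ Rs → ρ₁ ∈ Rs →
    ∀ ⦃G₀ G₁ G₂ : C⦄ (D₀ : DirectDerivation M ρ₀ G₀ G₁)
      (D₁ : DirectDerivation M ρ₁ G₁ G₂)
      (i₀ : ρ₀.R ⟶ D₁.D) (i₁ : ρ₁.L ⟶ D₀.D),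
      IsIndependencePair D₀ D₁ i₀ i₁ → IsStrongIndependencePair D₀ D₁ i₀ i₁

/-- A left-linear rewriting system is well-switching if it is strong enforcing and any
two consecutive direct derivations admit at most one independence pair. -/
def WellSwitching (M : MorphismProperty C) (Rs : Set (DPORule M)) : Prop :=
  StrongEnforcing M Rs ∧
  ∀ ⦃ρ₀ ρ₁ : DPORule M⦄, ρ₀ ∈ Rs → ρ₁ ∈ Rs →
    ∀ ⦃G₀ G₁ G₂ : C⦄ (D₀ : DirectDerivation M ρ₀ G₀ G₁)
      (D₁ : DirectDerivation M ρ₁ G₁ G₂)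
      (i₀ j₀ : ρ₀.R ⟶ D₁.D) (i₁ j₁ : ρ₁.L ⟶ D₀.D),
      IsIndependencePair D₀ D₁ i₀ i₁ → IsIndependencePair D₀ D₁ j₀ j₁ →
      i₀ = j₀ ∧ i₁ = j₁

/-- Local Church-Rosser Theorem: in a left-linear rewriting system `(X, Rs)` over an
`M`-adhesive category, if `(i₀, i₁)` is a strong independence pair between two
consecutive direct derivations `D₀ : G₀ ⇒ G₁` (applying `ρ₀`) and `D₁ : G₁ ⇒ G₂`
(applying `ρ₁`), then `D₀` and `D₁` are switchable: there is a switch of `D₀ · D₁`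
along `(i₀, i₁)`. -/
theorem local_church_rosser
    (M : MorphismProperty C) (hadh : IsMAdhesive M)
    (Rs : Set (DPORule M))
    {ρ₀ ρ₁ : DPORule M} (hρ₀ : ρ₀ ∈ Rs) (hρ₁ : ρ₁ ∈ Rs)
    {G₀ G₁ G₂ : C}
    (D₀ : DirectDerivation M ρ₀ G₀ G₁) (D₁ : DirectDerivation M ρ₁ G₁ G₂)
    (i₀ : ρ₀.R ⟶ D₁.D) (i₁ : ρ₁.L ⟶ D₀.D)
    (hstrong : IsStrongIndependencePair D₀ D₁ i₀ i₁) :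
    ∃ (G₁' : C) (E₀ : DirectDerivation M ρ₁ G₀ G₁') (E₁ : DirectDerivation M ρ₀ G₁' G₂),
      IsSwitch D₀ D₁ i₀ i₁ E₀ E₁ := by
  obtain ⟨⟨hi₀, hi₁⟩, hs⟩ := hstrong
  have := hadh.has_pullback D₀.g D₁.f D₁.hf
  obtain ⟨P, p₀, p₁, hP⟩ : ∃ (P : C) (p₀ : P ⟶ D₀.D) (p₁ : P ⟶ D₁.D),
      IsPullback p₀ p₁ D₀.g D₁.f := ⟨_, _, _, IsPullback.of_hasPullback D₀.g D₁.f⟩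
  obtain ⟨u₀, hu₀₀, hu₀₁⟩ : ∃ u₀ : ρ₀.K ⟶ P, u₀ ≫ p₀ = D₀.k ∧ u₀ ≫ p₁ = ρ₀.r ≫ i₀ :=
    hP.exists_lift _ _ (by rw [Category.assoc, hi₀, D₀.right.w])
  obtain ⟨u₁, hu₁₀, hu₁₁⟩ : ∃ u₁ : ρ₁.K ⟶ P, u₁ ≫ p₀ = ρ₁.l ≫ i₁ ∧ u₁ ≫ p₁ = D₁.k :=
    hP.exists_lift _ _ (by rw [Category.assoc, hi₁, D₁.left.w])
  obtain ⟨hR₀, hL₁, hpo⟩ := hs p₀ p₁ hP u₀ u₁ hu₀₀ hu₀₁ hu₁₁ hu₁₀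
  have := hadh.has_pushout ρ₀.l u₀ ρ₀.hl
  obtain ⟨Q₀, s₀, t₀, hQ₀⟩ : ∃ (Q₀ : C) (s₀ : ρ₀.L ⟶ Q₀) (t₀ : P ⟶ Q₀),
      IsPushout ρ₀.l u₀ s₀ t₀ := ⟨_, _, _, IsPushout.of_hasPushout ρ₀.l u₀⟩
  obtain ⟨Q₁, s₁, t₁, hQ₁⟩ : ∃ (Q₁ : C) (s₁ : ρ₁.R ⟶ Q₁) (t₁ : P ⟶ Q₁),
      IsPushout ρ₁.r u₁ s₁ t₁ := ⟨_, _, _, IsPushout.of_hasPushout ρ₁.r u₁⟩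
  have ht₀ : M t₀ := hadh.pushout_stable _ _ _ _ hQ₀.flip ρ₀.hl
  have := hadh.has_pushout t₀ t₁ ht₀
  obtain ⟨G₁', b, a, hG⟩ : ∃ (G₁' : C) (b : Q₀ ⟶ G₁') (a : Q₁ ⟶ G₁'), IsPushout t₀ t₁ b a :=
    ⟨_, _, _, IsPushout.of_hasPushout t₀ t₁⟩
  have hp₀ : M p₀ := hadh.pullback_stable _ _ _ _ hP.flip D₁.hf
  obtain ⟨q₀, hsq₀, htq₀⟩ : ∃ q₀ : Q₀ ⟶ G₀, s₀ ≫ q₀ = D₀.m ∧ t₀ ≫ q₀ = p₀ ≫ D₀.f :=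
    hQ₀.exists_desc _ _ (by rw [D₀.left.w, ← hu₀₀, Category.assoc])
  have hG₀ : IsPushout t₀ p₀ q₀ D₀.f :=
    IsPushout.of_top (by rw [hu₀₀, hsq₀]; exact D₀.left) htq₀ hQ₀
  obtain ⟨w, hsw, htw⟩ : ∃ w : Q₁ ⟶ G₂, s₁ ≫ w = D₁.h ∧ t₁ ≫ w = p₁ ≫ D₁.g :=
    hQ₁.exists_desc _ _ (by rw [D₁.right.w, ← hu₁₁, Category.assoc])
  have hG₂ : IsPushout t₁ p₁ w D₁.g :=
    IsPushout.of_top (by rw [hu₁₁, hsw]; exact D₁.right) htw hQ₁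
  refine ⟨G₁',
    { D := Q₀, m := i₁ ≫ D₀.f, k := u₁ ≫ t₀, f := q₀, g := b, h := s₁ ≫ a
      hf := hadh.pushout_stable _ _ _ _ hG₀ hp₀
      left := hL₁.paste_vert hG₀.flip
      right := hQ₁.paste_vert hG.flip },
    { D := Q₁, m := s₀ ≫ b, k := u₀ ≫ t₁, f := a, g := w, h := i₀ ≫ D₁.g
      hf := hadh.pushout_stable _ _ _ _ hG.flip ht₀
      left := hQ₀.paste_vert hG
      right := hR₀.paste_vert hG₂.flip },
    s₁, s₀, ⟨rfl, rfl⟩, hsq₀, hsw, rfl, rfl⟩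
end

section
/- Every M-linear rewriting system over an M-adhesive category is strong enforcing: every independence pair between two consecutive direct derivations is a strong independence pair. -/
/-!
Each of the two required squares is the top face of a cube standing on one of the given pushout
squares with apex `G₁`, namely `R₀ ⟵ K₀ ⟶ D₀` and `L₁ ⟵ K₁ ⟶ D₁`. In both cubes the vertical
arrows over the rule are identities, and the other two are opposite sides of the pullback square
`P`. Right-linearity of `ρ₀` puts `g₀`, hence `P ⟶ D₁`, in `M`, so all vertical arrows lie in `M`;
every vertical face is then a pullback (the chosen one, or a triangle through a monomorphism), and
the Van Kampen property makes the top face a pushout. The pushout of `r₁` along `u₁` exists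
because `r₁ ∈ M`.
-/

open CategoryTheory CategoryTheory.Limits

universe w v u

variable {C : Type u} [Category.{v} C]

/-- A commutative triangle `u ≫ q = k` with `q` mono, viewed as a pullback square. -/
lemma isPullback_of_triangle_mono {X Y Z : C} {u : X ⟶ Y} {q : Y ⟶ Z} {k : X ⟶ Z} [Mono q]
    (h : u ≫ q = k) : IsPullback u (𝟙 X) q k := by
  refine ⟨⟨by simpa using h⟩, ⟨PullbackCone.IsLimit.mk _ (fun s => s.snd) (fun s => ?_)
    (fun s => by simp) (fun s t _ ht => by simpa using ht)⟩⟩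
  rw [← cancel_mono q, Category.assoc, h, s.condition]

/-- Pulling a pushout along an arrow `l ∈ M` back along `d ∈ M` gives a pushout over the same
`l`, as soon as the map `m` opposite to `k` factors through `d`. -/
lemma IsMAdhesive.isPushout_restrict {M : MorphismProperty C} (hadh : IsMAdhesive M)
    {K L D G E P : C} {l : K ⟶ L} {k : K ⟶ D} {m : L ⟶ G} {f : D ⟶ G} {d : E ⟶ G}
    {p : P ⟶ E} {q : P ⟶ D} {u : K ⟶ P} {i : L ⟶ E}
    (hpo : IsPushout l k m f) (hl : M l) (hd : M d) (hpb : IsPullback p q d f)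
    (huq : u ≫ q = k) (hup : u ≫ p = l ≫ i) (hid : i ≫ d = m) :
    IsPushout l u i p := by
  have hq : M q := hadh.pullback_stable _ _ _ _ hpb hd
  have := hadh.mono q hq
  have := hadh.mono d hd
  exact (((hadh.van_kampen _ _ _ _ hpo.flip hl).2 u l p i (𝟙 K) q (𝟙 L) d hup
    (by simpa using hid) hpb.w (isPullback_of_triangle_mono huq)
    (IsPullback.of_vert_isIso ⟨by simp⟩)
    (hadh.contains_iso _ inferInstance) hq (hadh.contains_iso _ inferInstance) hd).2
      ⟨isPullback_of_triangle_mono hid, hpb⟩).flip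

/-- Every `M`-linear rewriting system over an `M`-adhesive category (all rules `(l, r)`
have both `l` and `r` in `M`) is strong enforcing: every independence pair between two
consecutive direct derivations is a strong independence pair. -/
theorem linear_system_strong_enforcing
    (M : MorphismProperty C) (hadh : IsMAdhesive M)
    (Rs : Set (DPORule M))
    (hlinear : ∀ ρ ∈ Rs, M ρ.r) :
    StrongEnforcing M Rs := by
  intro ρ₀ ρ₁ h₀ h₁ G₀ G₁ G₂ D₀ D₁ i₀ i₁ hi
  refine ⟨hi, fun P p₀ p₁ hP u₀ u₁ e₁ e₂ e₃ e₄ => ⟨?_, ?_, ?_⟩⟩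
  · exact hadh.isPushout_restrict D₀.right (hlinear _ h₀) D₁.hf hP.flip e₁ e₂ hi.1
  · have hg : M D₀.g := hadh.pushout_stable _ _ _ _ D₀.right.flip (hlinear _ h₀)
    exact hadh.isPushout_restrict D₁.left ρ₁.hl hg hP e₃ e₄ hi.2
  · exact hadh.has_pushout _ _ (hlinear _ h₁)
end

section
/- Every M-linear rewriting system over an M-adhesive category is well-switching: it is strong enforcing and, for any two consecutive direct derivations, there is at most one independence pair between them. -/
/-!
Right-linearity puts `g₀`, a pushout of `r₀ ∈ M`, into `M`; `f₁` is in `M` by definition. So both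
legs of the cospan `D₀ ⟶ G₁ ⟵ D₁` are monomorphisms, and an independence pair, which consists of
lifts of `h₀` along `f₁` and of `m₁` along `g₀`, is unique.

For strength, each of the two squares through the pullback `P` is the top face of a cube: for the
first one the bottom face is the right pushout of the first derivation, for the second one the left
pushout of the second derivation. The vertical edges are the other leg of the cospan into `G₁`, the
projection from `P` parallel to it, and two identities; the lift given by the independence pair
makes the cube commute, and since the two nontrivial edges are monomorphisms all vertical faces are
pullbacks. The Van Kampen property, in the form of
`IsMAdhesive.isPushout_of_lift`, says that the top faces are pushouts. The pushout of `r₁` along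
`u₁` exists because `r₁ ∈ M`.
-/

open CategoryTheory CategoryTheory.Limits

universe w v u

variable {C : Type u} [Category.{v} C]

/-- A pushout along an arrow `m ∈ M` can be pulled back along any arrow `d ∈ M` through which one
leg `g` of the pushout factors (via `i`): the resulting square `(u, m, p, i)` is a pushout. -/
lemma IsMAdhesive.isPushout_of_lift {M : MorphismProperty C} (hadh : IsMAdhesive M)
    {X₁ X₂ X₃ X₄ P Y : C} {f : X₁ ⟶ X₂} {m : X₁ ⟶ X₃} {n : X₂ ⟶ X₄} {g : X₃ ⟶ X₄}
    (H : IsPushout f m n g) (hm : M m) {d : Y ⟶ X₄} (hd : M d)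
    {p : P ⟶ Y} {b : P ⟶ X₂} (hP : IsPullback p b d n)
    {i : X₃ ⟶ Y} (hi : i ≫ d = g) {u : X₁ ⟶ P} (hub : u ≫ b = f) (hup : u ≫ p = m ≫ i) :
    IsPushout u m p i := by
  have hb : M b := hadh.pullback_stable _ _ _ _ hP hd
  have := hadh.mono _ hd
  have := hadh.mono _ hb
  have id_mem : ∀ X : C, M (𝟙 X) := fun X => hadh.contains_iso _ inferInstance
  -- A commutative square `x ≫ y = z`, with an identity as fourth side, is a pullback for `y` mono.
  have key : ∀ {X Y Z : C} (x : X ⟶ Y) (y : Y ⟶ Z) (z : X ⟶ Z) [Mono y], x ≫ y = z →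
      IsPullback x (𝟙 X) y z := by
    intro X Y Z x y z _ hxyz
    refine ⟨⟨by simpa using hxyz⟩, ⟨PullbackCone.IsLimit.mk _ (fun s => s.snd) ?_ ?_ ?_⟩⟩
    · intro s
      rw [← cancel_mono y, Category.assoc, hxyz, s.condition]
    · intro s
      simp
    · intro s t _ ht
      simpa using ht
  exact ((hadh.van_kampen f m n g H hm).2 u m p i (𝟙 X₁) b (𝟙 X₃) d
    hup (by simpa using hi) hP.w (key u b f hub)
    (IsPullback.of_vert_isIso ⟨by simp⟩) (id_mem _) hb (id_mem _) hd).2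
    ⟨key i d g hi, hP⟩

/-- Every `M`-linear rewriting system over an `M`-adhesive category (all rules `(l, r)`
have both `l` and `r` in `M`) is well-switching: it is strong enforcing and any two
consecutive direct derivations admit at most one independence pair. -/
theorem linear_system_well_switching
    (M : MorphismProperty C) (hadh : IsMAdhesive M)
    (Rs : Set (DPORule M))
    (hlinear : ∀ ρ ∈ Rs, M ρ.r) :
    WellSwitching M Rs := by
  have hg : ∀ {ρ : DPORule M} {G H : C} (D : DirectDerivation M ρ G H), ρ ∈ Rs → M D.g :=
    fun D hρ => hadh.pushout_stable _ _ _ _ D.right.flip (hlinear _ hρ)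
  refine ⟨?_, ?_⟩
  · intro ρ₀ ρ₁ h₀ h₁ G₀ G₁ G₂ D₀ D₁ i₀ i₁ hi
    refine ⟨hi, ?_⟩
    intro P p₀ p₁ hP u₀ u₁ hu₀ hu₀' hu₁ hu₁'
    exact ⟨(hadh.isPushout_of_lift D₀.right.flip (hlinear _ h₀) D₁.hf hP.flip
        hi.1 hu₀ hu₀').flip,
      (hadh.isPushout_of_lift D₁.left.flip ρ₁.hl (hg D₀ h₀) hP hi.2 hu₁ hu₁').flip,
      hadh.has_pushout _ _ (hlinear _ h₁)⟩
  · intro ρ₀ ρ₁ h₀ h₁ G₀ G₁ G₂ D₀ D₁ i₀ j₀ i₁ j₁ hi hj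
    have := hadh.mono _ D₁.hf
    have := hadh.mono _ (hg D₀ h₀)
    exact ⟨(cancel_mono D₁.f).1 (hi.1.trans hj.1.symm),
      (cancel_mono D₀.g).1 (hi.2.trans hj.2.symm)⟩
end

section
/- Every root-preserving graphical rewriting system is well-switching: it is strong enforcing and, for any two consecutive direct derivations, there is at most one independence pair between them. -/
/-!
Pushouts and pullbacks of `J`-graphs are computed pointwise, so strong enforcing reduces to
statements about sets.  Let `P` be the pullback of `g₀ : D₀ ⟶ G₁` and `f₁ : D₁ ⟶ G₁`.

The square `(r₀, u₀, p₁, i₀)` is the right pushout of the first derivation restricted to the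
subobject `D₁` of `G₁`, which contains the image of `h₀` (`typePushout_restrict`).  For the square
`(l₁, u₁, p₀, i₁)`, the map `g₀` can only identify elements in the image of `k₀`
(`typePushout_eq_of_notMem_range`), and these land in `D₁` because `h₀` factors through it.  Hence
`g₀` is injective over the complement of `D₁`, and the left pushout of the second derivation lifts
along `g₀` (`typePushout_lift`).  Neither argument uses roots.

Roots give uniqueness.  The first component of an independence pair is determined because `f₁` is
a monomorphism.  At a root `r₀` is injective, hence so is its pushout `g₀`, which determines the
second component at roots; by naturality it is then determined on all of `L₁`, whose elements all
come from roots.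
-/

open CategoryTheory CategoryTheory.Limits

universe w v u

variable {C : Type u} [Category.{v} C]

/-- An object `Y` of a category is a root if the only arrow with codomain `Y` is the
identity. -/
def IsRoot {J : Type w} [SmallCategory J] (Y : J) : Prop :=
  ∀ ⦃Z : J⦄ (f : Z ⟶ Y), ∃ e : Z = Y, f = eqToHom e

/-- In a pushout of sets, an element `x` outside the image of `k` is not identified with any
other element.  No injectivity is assumed: the characteristic function of `x`, paired with the
constantly false function, is a cocone. -/
lemma typePushout_eq_of_notMem_range {K R D H : Type u} {r : K ⟶ R} {k : K ⟶ D} {h : R ⟶ H}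
    {g : D ⟶ H} (sq : IsPushout r k h g) {x y : D} (hx : x ∉ Set.range k) (e : g x = g y) :
    x = y := by
  let χ : D ⟶ ULift.{u} Prop := ↾fun z => ⟨x = z⟩
  let ψ : R ⟶ ULift.{u} Prop := ↾fun _ => ⟨False⟩
  have w : r ≫ ψ = k ≫ χ := by
    ext a
    exact ⟨False.elim, fun hh => hx ⟨a, Eq.symm hh⟩⟩
  have hd : ∀ z, sq.desc ψ χ w (g z) = χ z := fun z =>
    ConcreteCategory.congr_hom (sq.inr_desc ψ χ w) z
  have : χ x = χ y := by rw [← hd, ← hd, e]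
  exact cast (congrArg ULift.down this) rfl

/-- A pushout of sets restricts along an injection `f : D' ⟶ H` through which the leg
`h = i ≫ f` factors: the pulled back square is again a pushout. -/
lemma typePushout_restrict {K R D H D' P : Type u} {r : K ⟶ R} {k : K ⟶ D} {h : R ⟶ H}
    {g : D ⟶ H} (sq : IsPushout r k h g) {f : D' ⟶ H} (hf : Function.Injective f)
    {p : P ⟶ D} {p' : P ⟶ D'} (pb : IsPullback p p' g f)
    {i : R ⟶ D'} (hi : i ≫ f = h) {u : K ⟶ P} (hu : u ≫ p = k) (hu' : u ≫ p' = r ≫ i) :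
    IsPushout r u i p' := by
  classical
  have hp : Function.Injective p := fun a b e => Types.ext_of_isPullback pb e <| hf <| by
    have h1 := ConcreteCategory.congr_hom pb.w a
    have h2 := ConcreteCategory.congr_hom pb.w b
    simp only [comp_apply] at h1 h2
    rw [← h1, ← h2, e]
  have hsurj : ∀ d : D', (∃ y, i y = d) ∨ ∃ q, p' q = d := by
    intro d
    rcases Types.eq_or_eq_of_isPushout sq (f d) with ⟨y, hy⟩ | ⟨x, hx⟩
    · refine Or.inl ⟨y, hf ?_⟩
      rw [← hy, ← hi, comp_apply]
    · obtain ⟨q, -, hq⟩ := Types.exists_of_isPullback pb x d hx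
      exact Or.inr ⟨q, hq⟩
  have key : ∀ s : PushoutCocone r u, ∃ φ : D' ⟶ s.pt, i ≫ φ = s.inl ∧ p' ≫ φ = s.inr := by
    intro s
    -- Elements of `D` outside `P` carry no value in the given cocone; they are sent to `none`.
    let t : D ⟶ Option s.pt := ↾fun x => if hx : ∃ q, p q = x then some (s.inr hx.choose) else none
    have ht : ∀ q, t (p q) = some (s.inr q) := by
      intro q
      have hx : ∃ q', p q' = p q := ⟨q, rfl⟩
      have : t (p q) = some (s.inr hx.choose) := dif_pos hx
      rw [this, hp hx.choose_spec]
    let t' : R ⟶ Option s.pt := ↾fun y => some (s.inl y)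
    have w : r ≫ t' = k ≫ t := by
      refine ConcreteCategory.hom_ext _ _ fun a => ?_
      have e : k a = p (u a) := (ConcreteCategory.congr_hom hu a).symm
      rw [comp_apply, comp_apply, e, ht]
      exact congrArg some (ConcreteCategory.congr_hom s.condition a)
    have hl : ∀ y, sq.desc t' t w (f (i y)) = some (s.inl y) := fun y => by
      have h1 := ConcreteCategory.congr_hom (sq.inl_desc t' t w) y
      have e : f (i y) = h y := ConcreteCategory.congr_hom hi y
      rw [e]
      exact h1
    have hr : ∀ q, sq.desc t' t w (f (p' q)) = some (s.inr q) := fun q => by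
      have h1 := ConcreteCategory.congr_hom (sq.inr_desc t' t w) (p q)
      have h2 := ConcreteCategory.congr_hom pb.w q
      simp only [comp_apply] at h1 h2
      rw [← h2, h1, ht]
    have hsome : ∀ d, ∃ z, sq.desc t' t w (f d) = some z := by
      intro d
      rcases hsurj d with ⟨y, rfl⟩ | ⟨q, rfl⟩
      · exact ⟨_, hl y⟩
      · exact ⟨_, hr q⟩
    choose φ hφ using hsome
    refine ⟨↾φ, ?_, ?_⟩
    · ext y
      exact Option.some.inj ((hφ (i y)).symm.trans (hl y))
    · ext q
      exact Option.some.inj ((hφ (p' q)).symm.trans (hr q))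
  choose φ h1 h2 using key
  refine ⟨⟨hu'.symm⟩, ⟨PushoutCocone.IsColimit.mk _ φ h1 h2 ?_⟩⟩
  intro s m hm1 hm2
  ext d
  rcases hsurj d with ⟨y, rfl⟩ | ⟨q, rfl⟩
  · exact ConcreteCategory.congr_hom (hm1.trans (h1 s).symm) y
  · exact ConcreteCategory.congr_hom (hm2.trans (h2 s).symm) q

/-- Let `m = i ≫ g` be a match of `l` with complement `f : D' ⟶ H`.  The pushout defining it
lifts along `g` provided `g` identifies distinct elements only when their common image is in the
range of `f`. -/
lemma typePushout_lift {K L D D' P H : Type u} {l : K ⟶ L} {k : K ⟶ D'} {m : L ⟶ H}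
    {f : D' ⟶ H} (sq : IsPushout l k m f) (hl : Function.Injective l) {g : D ⟶ H}
    (hg : ∀ x y, g x = g y → g x ∉ Set.range f → x = y)
    {p : P ⟶ D} {p' : P ⟶ D'} (pb : IsPullback p p' g f)
    {i : L ⟶ D} (hi : i ≫ g = m) {u : K ⟶ P} (hu : u ≫ p = l ≫ i) :
    IsPushout l u i p := by
  have hf : Function.Injective f :=
    Types.pushoutCocone_inr_injective_of_isColimit sq.isColimit hl
  have ei : ∀ y, g (i y) = m y := fun y => ConcreteCategory.congr_hom hi y
  have ep : ∀ q, g (p q) = f (p' q) := fun q => ConcreteCategory.congr_hom pb.w q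
  have hp : Function.Injective p := fun a b e => Types.ext_of_isPullback pb e <| hf <| by
    rw [← ep, ← ep, e]
  have pbsq := Types.isPullback_of_isPushout sq hl
  have : Mono p := (mono_iff_injective p).2 hp
  refine (Types.isPushout_of_isPullback_of_mono' (t := u) (l := l) (r := p) (b := i) ?_ ?_ ?_).flip
  · rw [Types.isPullback_iff]
    refine ⟨hu, fun a b hab => hl hab.2, fun q y hqy => ?_⟩
    have e : m y = f (p' q) := by rw [← ei, ← ep, hqy]
    obtain ⟨a, ha, -⟩ := Types.exists_of_isPullback pbsq y (p' q) e
    refine ⟨a, hp ?_, ha⟩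
    rw [hqy, ← ha]
    exact ConcreteCategory.congr_hom hu a
  · refine Set.eq_univ_of_forall fun x => ?_
    by_cases hx : g x ∈ Set.range f
    · obtain ⟨d, hd⟩ := hx
      obtain ⟨q, hq, -⟩ := Types.exists_of_isPullback pb x d hd.symm
      exact Or.inl ⟨q, hq⟩
    · rcases Types.eq_or_eq_of_isPushout sq (g x) with ⟨y, hy⟩ | ⟨d, hd⟩
      · exact Or.inr ⟨y, (hg x (i y) (by rw [ei, hy]) hx).symm⟩
      · exact absurd ⟨d, hd⟩ hx
  · intro y y' hy _ e
    exact typePushout_eq_of_notMem_range sq.flip hy (by rw [← ei, ← ei, e])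

/-- For any left-linear system of `J`-graphs, independence pairs are strong. -/
lemma graph_strongEnforcing {J : Type u} [SmallCategory J]
    (Rs : Set (DPORule (MorphismProperty.monomorphisms (J ⥤ Type u)))) :
    StrongEnforcing (MorphismProperty.monomorphisms (J ⥤ Type u)) Rs := by
  intro ρ₀ ρ₁ _ _ G₀ G₁ G₂ D₀ D₁ i₀ i₁ hind
  refine ⟨hind, fun P p₀ p₁ pb u₀ u₁ h1 h2 _ h4 => ?_⟩
  obtain ⟨hi₀, hi₁⟩ := hind
  have hmono : ∀ Z, Function.Injective (D₁.f.app Z) := fun Z => by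
    have : Mono D₁.f := D₁.hf
    exact (mono_iff_injective _).1 inferInstance
  have hl : ∀ Z, Function.Injective (ρ₁.l.app Z) := fun Z => by
    have : Mono ρ₁.l := ρ₁.hl
    exact (mono_iff_injective _).1 inferInstance
  refine ⟨.of_forall_isPushout_app fun Z => ?_, .of_forall_isPushout_app fun Z => ?_,
    inferInstance⟩
  · exact typePushout_restrict (D₀.right.app Z) (hmono Z) (pb.app Z)
      (NatTrans.congr_app hi₀ Z) (NatTrans.congr_app h1 Z) (NatTrans.congr_app h2 Z)
  · refine typePushout_lift (D₁.left.app Z) (hl Z) ?_ (pb.app Z)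
      (NatTrans.congr_app hi₁ Z) (NatTrans.congr_app h4 Z)
    intro x y e hx
    refine typePushout_eq_of_notMem_range (D₀.right.app Z) ?_ e
    -- If `x = k₀ a` then `g₀ x = h₀ (r₀ a) = f₁ (i₀ (r₀ a))` lies in the image of `f₁`.
    rintro ⟨a, rfl⟩
    refine hx ⟨i₀.app Z (ρ₀.r.app Z a), ?_⟩
    have e1 := ConcreteCategory.congr_hom (NatTrans.congr_app hi₀ Z) (ρ₀.r.app Z a)
    have e2 := ConcreteCategory.congr_hom (NatTrans.congr_app D₀.right.w Z) a
    exact e1.trans e2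

/-- Every root-preserving graphical rewriting system is well-switching.  Here the
category of `J`-graphs is the functor category `J ⥤ Type`, rewriting is taken with
respect to the class of all monomorphisms, and a root-preserving graphical rewriting
system is a left-linear rewriting system such that, for each rule `(l : K ⟶ L, r : K ⟶ R)`:
(1) every element of `L` at any object comes from a root along some arrow, and
(2) the component of `r` at every root is injective. -/
theorem root_preserving_well_switching
    {J : Type u} [SmallCategory J]
    (Rs : Set (DPORule (MorphismProperty.monomorphisms (J ⥤ Type u))))
    (hroot : ∀ ρ ∈ Rs, ∀ (Z : J) (x : ρ.L.obj Z),
      ∃ (Y : J) (_ : IsRoot Y) (f : Y ⟶ Z) (y : ρ.L.obj Y), ρ.L.map f y = x)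
    (hinj : ∀ ρ ∈ Rs, ∀ Y : J, IsRoot Y → Function.Injective (ρ.r.app Y)) :
    WellSwitching (MorphismProperty.monomorphisms (J ⥤ Type u)) Rs := by
  refine ⟨graph_strongEnforcing Rs, ?_⟩
  intro ρ₀ ρ₁ hρ₀ hρ₁ G₀ G₁ G₂ D₀ D₁ i₀ j₀ i₁ j₁ hi hj
  have : Mono D₁.f := D₁.hf
  refine ⟨(cancel_mono D₁.f).1 (hi.1.trans hj.1.symm), ?_⟩
  ext Z x
  obtain ⟨Y, hY, f, y, rfl⟩ := hroot ρ₁ hρ₁ Z x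
  have hg : Function.Injective (D₀.g.app Y) :=
    Types.pushoutCocone_inr_injective_of_isColimit (D₀.right.app Y).isColimit (hinj ρ₀ hρ₀ Y hY)
  have e : i₁.app Y y = j₁.app Y y :=
    hg (ConcreteCategory.congr_hom (NatTrans.congr_app (hi.2.trans hj.2.symm) Y) y)
  have e1 := ConcreteCategory.congr_hom (i₁.naturality f) y
  have e2 := ConcreteCategory.congr_hom (j₁.naturality f) y
  simp only [comp_apply] at e1 e2
  exact e1.trans ((congrArg _ e).trans e2.symm)
end

section
/- Let X be an M-adhesive category that has all pushouts and satisfies both the M-mixed decomposition property and the M-pushout decomposition property. Then every left-linear rewriting system on X is strong enforcing: every independence pair between two consecutive direct derivations is a strong independence pair. -/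
/-!
Let `(P, p₀, p₁)` be the pullback of `g₀` and `f₁`. Pasting the square of `u₀`, `r₀` with the
pullback square gives the right pushout of the first derivation, and `f₁ ∈ M`, so mixed
decomposition makes `(r₀, u₀, p₁, i₀)` a pushout. By pushout cancellation the pullback square is
then also a pushout. Pasting the square of `u₁`, `l₁` with it gives the left pushout of the second
derivation; since `l₁`, `p₀` and `f₁` all lie in `M`, pushout decomposition makes
`(l₁, u₁, p₀, i₁)` a pushout.
-/

open CategoryTheory CategoryTheory.Limits

universe w v u

variable {C : Type u} [Category.{v} C]

/-- The `M`-mixed decomposition property: given a commutative diagram whose outer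
rectangle is a pushout, if `k ∈ M` and the right square is a pullback, then the left
square is a pushout. -/
def MixedDecomposition (M : MorphismProperty C) : Prop :=
  ∀ ⦃X A Y B Z W : C⦄ (a : X ⟶ A) (f : X ⟶ Y) (g : Y ⟶ Z) (b : Y ⟶ B)
    (c : Z ⟶ W) (h : A ⟶ B) (k : B ⟶ W),
    f ≫ b = a ≫ h → g ≫ c = b ≫ k →
    IsPushout (f ≫ g) a c (h ≫ k) →
    M k → IsPullback g b c k →
    IsPushout f a b h

/-- The `M`-pushout decomposition property: given a commutative diagram whose outer
rectangle is a pushout, if `a, b, c ∈ M` and the right square is a pushout, then the left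
square is a pushout. -/
def PushoutDecomposition (M : MorphismProperty C) : Prop :=
  ∀ ⦃X A Y B Z W : C⦄ (a : X ⟶ A) (f : X ⟶ Y) (g : Y ⟶ Z) (b : Y ⟶ B)
    (c : Z ⟶ W) (h : A ⟶ B) (k : B ⟶ W),
    f ≫ b = a ≫ h → g ≫ c = b ≫ k →
    IsPushout (f ≫ g) a c (h ≫ k) →
    M a → M b → M c → IsPushout g b c k →
    IsPushout f a b h

/-- If an `M`-adhesive category has all pushouts and satisfies the `M`-mixed and the
`M`-pushout decomposition properties, then every left-linear rewriting system on it is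
strong enforcing. -/
theorem decomposition_implies_strong_enforcing
    (M : MorphismProperty C) (hadh : IsMAdhesive M)
    [HasPushouts C]
    (hmixed : MixedDecomposition M) (hpush : PushoutDecomposition M) :
    ∀ Rs : Set (DPORule M), StrongEnforcing M Rs := by
  rintro Rs ρ₀ ρ₁ - - G₀ G₁ G₂ D₀ D₁ i₀ i₁ ⟨hi₀, hi₁⟩
  refine ⟨⟨hi₀, hi₁⟩, ?_⟩
  intro P p₀ p₁ hP u₀ u₁ hu₀ hu₀' hu₁ hu₁'
  have outer₀ : IsPushout (u₀ ≫ p₀) ρ₀.r D₀.g (i₀ ≫ D₁.f) := by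
    rw [hu₀, hi₀]
    exact D₀.right.flip
  have left₀ : IsPushout u₀ ρ₀.r p₁ i₀ :=
    hmixed ρ₀.r u₀ p₀ p₁ D₀.g i₀ D₁.f hu₀' hP.w outer₀ D₁.hf hP
  -- The pullback square is a pushout, by cancelling `left₀` from `outer₀`.
  have hP' : IsPushout p₀ p₁ D₀.g D₁.f := IsPushout.of_left outer₀ hP.w left₀
  have outer₁ : IsPushout (u₁ ≫ p₁) ρ₁.l D₁.f (i₁ ≫ D₀.g) := by
    rw [hu₁, hi₁]
    exact D₁.left.flip
  have hp₀ : M p₀ := hadh.pullback_stable p₁ p₀ D₁.f D₀.g hP.flip D₁.hf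
  have left₁ : IsPushout u₁ ρ₁.l p₀ i₁ :=
    hpush ρ₁.l u₁ p₁ p₀ D₁.f i₁ D₀.g hu₁' hP.w.symm outer₁ ρ₁.hl hp₀ D₁.hf hP'.flip
  exact ⟨left₀.flip, left₁.flip, inferInstance⟩
end

section
/- Let (X, M) be a pair of type B. Then X satisfies the M-mixed decomposition property and the M-pushout decomposition property. -/
/-!
The mixed decomposition property is `M`-stability of the outer pushout: the left square is the
pullback of the outer one along `k`, with vertical arrows `𝟙 X`, `g`, `𝟙 A` and `k`, all in `M`.

For the pushout decomposition property, write `A = X + A'` and `B = Y + B'` with coprojections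
`a, a'` and `b, b'`, i.e. as pushouts over the initial object. Pasting with the two given pushouts
exhibits both `a' ≫ h ≫ k : A' ⟶ W` and `b' ≫ k : B' ⟶ W` as complements of `c : Z ⟶ W`.
Coproducts are disjoint and `M`-stable, so an arrow of `M` that is disjoint from one summand
factors through the other (`exists_factor`); in particular the two complements are isomorphic over
`W`. It remains to see that `a' ≫ h` itself factors through `b'`. It need not be known to be in
`M`, but it factors through the pullback of `b' ≫ k` along `k`, which is an arrow of `M` disjoint
from `Y`. Hence `a' ≫ h` is isomorphic to `b'`, so `B = Y + A'` via `b` and `a' ≫ h`, and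
cancelling the pushout `A = X + A'` from this one leaves the left square.
-/

open CategoryTheory CategoryTheory.Limits

universe w v u

variable {C : Type u} [Category.{v} C]

/-- A pushout square (top `f`, left `m`, right `n`, bottom `g`) is `A`-stable if for
every commutative cube having it as bottom face, with pullbacks as back and left faces
and vertical arrows in `A`, the front and right faces being pullbacks implies that the
top face is a pushout. -/
def IsMStableSquare (A : MorphismProperty C) {X₁ X₂ X₃ X₄ : C}
    (f : X₁ ⟶ X₂) (m : X₁ ⟶ X₃) (n : X₂ ⟶ X₄) (g : X₃ ⟶ X₄) : Prop :=
  IsPushout f m n g ∧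
  ∀ ⦃Y₁ Y₂ Y₃ Y₄ : C⦄ (f' : Y₁ ⟶ Y₂) (m' : Y₁ ⟶ Y₃) (n' : Y₂ ⟶ Y₄) (g' : Y₃ ⟶ Y₄)
    (a : Y₁ ⟶ X₁) (b : Y₂ ⟶ X₂) (c : Y₃ ⟶ X₃) (d : Y₄ ⟶ X₄),
    f' ≫ n' = m' ≫ g' →
    IsPullback f' a b f → IsPullback m' a c m →
    A a → A b → A c → A d →
    IsPullback g' c d g → IsPullback n' b d n →
    IsPushout f' m' n' g'

/-- A pair `(X, M)` with `X` an `M`-adhesive category is of type `B` if every arrow of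
`M` is a coproduct coprojection, `X` has all pushouts, `X` has a strict initial object
whose unique arrows into every object belong to `M`, and all pushouts are `M`-stable. -/
structure TypeB (M : MorphismProperty C) [HasInitial C] : Prop where
  adhesive : IsMAdhesive M
  coproj : ∀ ⦃X Y : C⦄ (m : X ⟶ Y), M m →
    ∃ (X' : C) (m' : X' ⟶ Y), Nonempty (IsColimit (BinaryCofan.mk m m'))
  pushouts : HasPushouts C
  strict_initial : ∀ ⦃A : C⦄ (f : A ⟶ ⊥_ C), IsIso f
  initial_mem : ∀ Z : C, M (initial.to Z)
  stable : ∀ ⦃W X Y Z : C⦄ (f : W ⟶ X) (m : W ⟶ Y) (n : X ⟶ Z) (g : Y ⟶ Z),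
    IsPushout f m n g → IsMStableSquare M f m n g

namespace TypeB

variable [HasInitial C] {M : MorphismProperty C}

/-- A square with the strict initial object as corner is a pullback as soon as every competing
cone has an apex mapping to the initial object. -/
lemma isPullback_initial (hB : TypeB M) {T Y B : C} (u : T ⟶ B) (b : Y ⟶ B)
    (H : ∀ (P : C) (p : P ⟶ T) (q : P ⟶ Y), p ≫ u = q ≫ b → Nonempty (P ⟶ ⊥_ C)) :
    IsPullback (initial.to T) (initial.to Y) u b := by
  refine ⟨⟨Subsingleton.elim _ _⟩, ⟨PullbackCone.IsLimit.mk _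
    (fun s => (H s.pt s.fst s.snd s.condition).some) ?_ ?_ ?_⟩⟩
  -- An object mapping to the strict initial object is initial, so all arrows out of it agree.
  all_goals
    intro s
    have := hB.strict_initial (H s.pt s.fst s.snd s.condition).some
    have hs : IsInitial s.pt :=
      initialIsInitial.ofIso (asIso (H s.pt s.fst s.snd s.condition).some).symm
  · exact hs.hom_ext _ _
  · exact hs.hom_ext _ _
  · intros
    exact hs.hom_ext _ _

lemma mono_initial (hB : TypeB M) (Z : C) : Mono (initial.to Z) :=
  hB.adhesive.mono _ (hB.initial_mem Z)

/-- Coproducts are disjoint: compare the coproduct square with its pullback along the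
coprojection `b`. -/
lemma disjoint (hB : TypeB M) {Y B' B : C} {b : Y ⟶ B} {b' : B' ⟶ B}
    (S : IsPushout (initial.to Y) (initial.to B') b b') :
    IsPullback (initial.to Y) (initial.to B') b b' := by
  have := hB.mono_initial B'
  have hid : ∀ Z : C, M (𝟙 Z) := fun Z => hB.adhesive.contains_iso _ inferInstance
  have hb : M b := hB.adhesive.pushout_stable _ _ _ _ S (hB.initial_mem _)
  refine (((hB.adhesive.van_kampen _ _ _ _ S (hB.initial_mem _)).2
    (initial.to Y) (𝟙 _) (𝟙 Y) (initial.to Y) (𝟙 _) (𝟙 Y) (initial.to B') b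
    (by simp) (Subsingleton.elim _ _) rfl
    (IsPullback.of_vert_isIso ⟨by simp⟩) (IsPullback.of_isLimit (PullbackCone.isLimitMkIdId _))
    (hid _) (hid _) (hB.initial_mem _) hb).1
    (IsPushout.of_vert_isIso ⟨by simp⟩)).1

/-- An arrow of `M` disjoint from one summand of a coproduct factors through the other. -/
lemma exists_factor (hB : TypeB M) {Y B' B T : C} {b : Y ⟶ B} {b' : B' ⟶ B}
    (S : IsPushout (initial.to Y) (initial.to B') b b') (u : T ⟶ B) (hu : M u)
    (H : ∀ (P : C) (p : P ⟶ T) (q : P ⟶ Y), p ≫ u = q ≫ b → Nonempty (P ⟶ ⊥_ C)) :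
    ∃ t : T ⟶ B', t ≫ b' = u := by
  have := hB.mono_initial Y
  have hb' : M b' := hB.adhesive.pushout_stable _ _ _ _ S.flip (hB.initial_mem _)
  have := hB.adhesive.has_pullback u b' hb'
  have hQ : IsPullback (pullback.fst u b') _ u b' := IsPullback.of_hasPullback _ _
  -- By stability, `T` is the coproduct of the initial object and the pullback of `u` along `b'`.
  have hp := (hB.stable _ _ _ _ S).2 (𝟙 _) (initial.to (pullback u b')) (initial.to T)
    (pullback.fst u b') (𝟙 _) (initial.to Y) (pullback.snd u b') u (Subsingleton.elim _ _)
    (IsPullback.of_isLimit (PullbackCone.isLimitMkIdId _))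
    (initial.hom_ext (initial.to (⊥_ C)) (𝟙 _) ▸
      hB.isPullback_initial (pullback.snd u b') (initial.to B') fun _ _ q _ => ⟨q⟩)
    (hB.adhesive.contains_iso _ inferInstance) (hB.initial_mem _)
    (hB.adhesive.pullback_stable _ _ _ _ hQ hu) hu hQ (hB.isPullback_initial u b H)
  have : IsIso (pullback.fst u b') := hp.isIso_inr_of_isIso
  exact ⟨inv (pullback.fst u b') ≫ pullback.snd u b', by
    rw [Category.assoc, ← pullback.condition, IsIso.inv_hom_id_assoc]⟩

/-- An arrow of `M` has a complement, expressed as a pushout over the initial object. -/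
lemma exists_complement (hB : TypeB M) {X A : C} (a : X ⟶ A) (ha : M a) :
    ∃ (A' : C) (a' : A' ⟶ A), IsPushout (initial.to X) (initial.to A') a a' := by
  obtain ⟨A', a', ⟨h⟩⟩ := hB.coproj a ha
  exact ⟨A', a', IsPushout.of_is_coproduct' h initialIsInitial⟩

lemma mixedDecomposition (hB : TypeB M) : MixedDecomposition M := by
  intro X A Y B Z W a f g b c h k hl _ hout hk hpb
  have := hB.adhesive.mono k hk
  have hg : M g := hB.adhesive.pullback_stable _ _ _ _ hpb.flip hk
  have := hB.adhesive.mono g hg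
  have hid : ∀ Z : C, M (𝟙 Z) := fun Z => hB.adhesive.contains_iso _ inferInstance
  -- As `m` is mono, the pullback of `e ≫ m` along `m` is `e`.
  have key : ∀ {P Q R : C} (e : P ⟶ Q) (m : Q ⟶ R) [Mono m], IsPullback e (𝟙 P) m (e ≫ m) := by
    intro P Q R e m _
    refine ⟨⟨by simp⟩, ⟨PullbackCone.IsLimit.mk _ (fun s => s.snd) ?_ ?_ ?_⟩⟩
    · intro s
      rw [← cancel_mono m, Category.assoc, s.condition]
    · intro s
      simp
    · intro s l _ h2
      simpa using h2
  exact (hB.stable _ _ _ _ hout).2 f a b h (𝟙 X) g (𝟙 A) k hl (key f g)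
    (IsPullback.of_vert_isIso ⟨by simp⟩) (hid _) hg (hid _) hk (key h k) hpb.flip

lemma pushoutDecomposition (hB : TypeB M) : PushoutDecomposition M := by
  intro X A Y B Z W a f g b c h k hl hr hout ha hb _ hright
  obtain ⟨A', a', SA⟩ := hB.exists_complement a ha
  obtain ⟨B', b', SB⟩ := hB.exists_complement b hb
  have Sw : IsPushout (initial.to Z) (initial.to B') c (b' ≫ k) := by
    simpa using SB.paste_horiz hright
  have Sv : IsPushout (initial.to Z) (initial.to A') c (a' ≫ h ≫ k) := by
    simpa using SA.paste_horiz hout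
  have hw : M (b' ≫ k) := hB.adhesive.pushout_stable _ _ _ _ Sw.flip (hB.initial_mem _)
  have hv : M (a' ≫ h ≫ k) := hB.adhesive.pushout_stable _ _ _ _ Sv.flip (hB.initial_mem _)
  have := hB.adhesive.mono _ hw
  have := hB.adhesive.mono _ hv
  have Dw := hB.disjoint Sw
  have Dv := hB.disjoint Sv
  obtain ⟨e, he⟩ := hB.exists_factor Sw _ hv fun P p q hpq => ⟨Dv.lift q p hpq.symm⟩
  obtain ⟨e', he'⟩ := hB.exists_factor Sv _ hw fun P p q hpq => ⟨Dw.lift q p hpq.symm⟩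
  have := hB.adhesive.has_pullback k (b' ≫ k) hw
  have hR := IsPullback.of_hasPullback k (b' ≫ k)
  obtain ⟨s, hs⟩ := hB.exists_factor SB (pullback.fst k (b' ≫ k))
    (hB.adhesive.pullback_stable _ _ _ _ hR.flip hw) fun P p q hpq =>
      ⟨Dw.lift (q ≫ g) (p ≫ pullback.snd k (b' ≫ k)) (by
        rw [Category.assoc, Category.assoc, ← pullback.condition, hr, ← Category.assoc,
          ← hpq, Category.assoc])⟩
  obtain ⟨t, ht⟩ : ∃ t : A' ⟶ B', t ≫ b' = a' ≫ h :=
    ⟨pullback.lift (a' ≫ h) e (by rw [he, Category.assoc]) ≫ s, by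
      rw [Category.assoc, hs, pullback.lift_fst]⟩
  have htw : t ≫ b' ≫ k = a' ≫ h ≫ k := by
    rw [← Category.assoc, ht, Category.assoc]
  have : IsIso t := by
    refine ⟨e', ?_, ?_⟩
    · rw [← cancel_mono (a' ≫ h ≫ k), Category.assoc, he', htw, Category.id_comp]
    · rw [← cancel_mono (b' ≫ k), Category.assoc, htw, he', Category.id_comp]
  -- `B` is the coproduct of `Y` and `A'`, with coprojections `b` and `a' ≫ h`.
  have SB' : IsPushout (initial.to X ≫ f) (initial.to A') b (a' ≫ h) := by
    refine SB.of_iso (Iso.refl _) (Iso.refl _) (asIso t).symm (Iso.refl _)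
      ?_ ?_ ?_ ?_
    · exact Subsingleton.elim _ _
    · exact Subsingleton.elim _ _
    · simp
    · simp [← ht]
  exact IsPushout.of_left SB' hl SA

end TypeB

/-- If `(X, M)` is a pair of type `B`, then `X` satisfies the `M`-mixed decomposition
property and the `M`-pushout decomposition property. -/
theorem typeB_decomposition
    [HasInitial C] (M : MorphismProperty C) (hB : TypeB M) :
    MixedDecomposition M ∧ PushoutDecomposition M :=
  ⟨hB.mixedDecomposition, hB.pushoutDecomposition⟩
end

section
/- Let (X, M) be a pair of type B. Given a commutative diagram with bottom row a binary coproduct cocone ι_X : X → X+Y ← Y : ι_Y, top row arrows f : A → C ← B : g, and vertical arrows r : A → X, s : C → X+Y, t : B → Y all in M with s∘f = ι_X∘r and s∘g = ι_Y∘t, the top row (C, f, g) is a coproduct cocone if and only if both squares are pullbacks. -/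
/-! A binary coproduct is the same thing as a pushout over the initial object, and `⊥_ C ⟶ Y` lies
in `M`, so the pushout square with apex `S` is an `M`-Van Kampen square. The two squares of the
diagram are the front and right faces of a cube over it whose remaining vertical arrow is the
identity of `⊥_ C`; its back and left faces are pullbacks because the initial object is strict
(`isPullback_of_strict`). The Van Kampen property of this cube is exactly the claim.
-/

open CategoryTheory CategoryTheory.Limits

universe w v u

variable {C : Type u} [Category.{v} C]

/-- Every arrow pulls back along the arrow from a strict initial object to the identity of
that initial object. -/
theorem isPullback_of_strict [HasInitial C]
    (strict : ∀ ⦃A : C⦄ (f : A ⟶ ⊥_ C), IsIso f) {A X : C} (r : A ⟶ X) :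
    IsPullback (initial.to A) (𝟙 (⊥_ C)) r (initial.to X) := by
  refine ⟨⟨initial.hom_ext _ _⟩, ⟨PullbackCone.IsLimit.mk _ (fun c => c.snd) ?_ ?_ ?_⟩⟩
  · intro c
    -- the vertex of the cone is itself initial
    have := strict c.snd
    rw [← cancel_epi (inv c.snd)]
    exact initial.hom_ext _ _
  · intro c
    simp
  · intro c m _ h
    simpa using h

/-- Extensivity-like property for pairs of type `B`.  Given a commutative diagram whose
bottom row `ι_X : X ⟶ S ⟵ Y : ι_Y` is a binary coproduct cocone and whose vertical
arrows `r : A ⟶ X`, `s : C' ⟶ S`, `t : B ⟶ Y` are in `M`, the top row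
`f : A ⟶ C' ⟵ B : g` is a coproduct cocone if and only if both squares are pullbacks. -/
theorem typeB_extensivity
    [HasInitial C] (M : MorphismProperty C) (hB : TypeB M)
    {A B C' X Y S : C}
    (ιX : X ⟶ S) (ιY : Y ⟶ S)
    (hS : Nonempty (IsColimit (BinaryCofan.mk ιX ιY)))
    (f : A ⟶ C') (g : B ⟶ C')
    (r : A ⟶ X) (s : C' ⟶ S) (t : B ⟶ Y)
    (hr : M r) (hs : M s) (ht : M t)
    (hsq₁ : f ≫ s = r ≫ ιX) (hsq₂ : g ≫ s = t ≫ ιY) :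
    Nonempty (IsColimit (BinaryCofan.mk f g)) ↔
      (IsPullback f r s ιX ∧ IsPullback g t s ιY) := by
  have back := isPullback_of_strict hB.strict_initial r
  have left := isPullback_of_strict hB.strict_initial t
  obtain ⟨hS⟩ := hS
  have po : IsPushout (initial.to X) (initial.to Y) ιX ιY :=
    IsPushout.of_is_coproduct hS initialIsInitial
  have vk := (hB.adhesive.van_kampen _ _ _ _ po (hB.initial_mem Y)).2
    (initial.to A) (initial.to B) f g (𝟙 (⊥_ C)) r t s
    (initial.hom_ext _ _) hsq₂ hsq₁ back left
    (hB.adhesive.contains_iso _ inferInstance) hr ht hs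
  rw [and_comm, ← vk]
  constructor
  · rintro ⟨h⟩
    exact IsPushout.of_is_coproduct h initialIsInitial
  · intro h
    exact ⟨isCoproductOfIsInitialIsPushout f g _ _ initialIsInitial h.isColimit⟩
end

section
/- Let (X, M) be a pair of type B and suppose the square with sides f : A → B0, m : A → C in M, ι_{B0} : B0 → B0+B1 the coproduct coprojection, and g : C → B0+B1 is a pullback. Then there exist an object E, an arrow e : E → C in M and an arrow φ : E → B1 such that (C, m, e) is a binary coproduct cocone and g is the induced arrow with g∘m = ι_{B0}∘f and g∘e = ι_{B1}∘φ. Moreover, the square is a pushout if and only if φ is an isomorphism. -/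
/-!
In a pair of type `B` the arrows of `M` are exactly the coproduct coprojections, and the
Van Kampen property shows at once that coproducts are disjoint and that an arrow *of `M`* into a
coproduct which misses one summand factors through the other (`TypeB.factor`).  The pulled-back
map `g : C' ⟶ B₀ + B₁` need not lie in `M`, and the heart of the argument is to show that
no nonzero object `Q` maps to a coproduct `S = B₀ + B₁` while missing both summands
(`TypeB.no_third_part`).

For such a `q : Q ⟶ S`, form the pushout `W` of `q` along itself, with its fold map `W ⟶ S`.
Since `q` misses `Bᵢ`, stability of this pushout says that the part of `W` lying over `Bᵢ` is
`Bᵢ + Bᵢ`.  These two parts are disjoint subobjects in `M`, so their coproduct maps to `W` by an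
arrow of `M` (`TypeB.copair_mem`).  This arrow is epi, because `S + S ⟶ W` is, hence it is an
isomorphism.  Thus `W` is `S + S` with the canonical coprojections, and as the two composites
`Q ⟶ W` agree, disjointness of `S + S` makes `Q` initial.

For the theorem, let `E` be the complement of `A` in `C'` and let `P` be the pullback of `B₁` along
`g`.  By `TypeB.factor`, `P` embeds in `E` by an arrow of `M`; its complement in `E` misses both
summands of `S`, so it is initial and `P ≅ E`, which gives `φ`.  The pushout criterion follows by
pasting with the pushout `C' = A + E` of the initial object: the square is a pushout if and only
if `(ιB₀, φ ≫ ιB₁)` exhibits `S` as `B₀ + E`, and complements in `M` are unique.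
-/

open CategoryTheory CategoryTheory.Limits

universe w v u

variable {C : Type u} [Category.{v} C]

/-- `S` is the coproduct of `A` and `B` with coprojections `a` and `b`, expressed as a pushout
over the initial object. -/
abbrev IsSum [HasInitial C] {A B S : C} (a : A ⟶ S) (b : B ⟶ S) : Prop :=
  IsPushout (initial.to A) (initial.to B) a b

/-- Two arrows into `Z` are disjoint when any object mapping compatibly to both sources maps to
the initial object (and so, when the initial object is strict, is itself initial). -/
def DisjointArrows [HasInitial C] {A B Z : C} (a : A ⟶ Z) (b : B ⟶ Z) : Prop :=
  ∀ ⦃U : C⦄ (u : U ⟶ A) (v : U ⟶ B), u ≫ a = v ≫ b → Nonempty (U ⟶ ⊥_ C)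

theorem DisjointArrows.symm [HasInitial C] {A B Z : C} {a : A ⟶ Z} {b : B ⟶ Z}
    (h : DisjointArrows a b) : DisjointArrows b a :=
  fun _ u v w => h v u w.symm

theorem isSum_of_isColimit [HasInitial C] {A B S : C} {a : A ⟶ S} {b : B ⟶ S}
    (h : Nonempty (IsColimit (BinaryCofan.mk a b))) : IsSum a b :=
  h.elim fun h => IsPushout.of_is_coproduct' h initialIsInitial

/-- The universal property of a coproduct, where no compatibility is needed. -/
theorem IsSum.exists_desc [HasInitial C] {A B S T : C} {a : A ⟶ S} {b : B ⟶ S}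
    (h : IsSum a b) (x : A ⟶ T) (y : B ⟶ T) : ∃ z : S ⟶ T, a ≫ z = x ∧ b ≫ z = y :=
  ⟨h.desc x y (initial.hom_ext _ _), h.inl_desc _ _ _, h.inr_desc _ _ _⟩

namespace TypeB

variable [HasInitial C] {M : MorphismProperty C}

theorem hasStrictInitialObjects (hB : TypeB M) : HasStrictInitialObjects C :=
  hasStrictInitialObjects_of_initial_is_strict fun _ f => hB.strict_initial f

theorem exists_isSum (hB : TypeB M) (A B : C) :
    ∃ (S : C) (a : A ⟶ S) (b : B ⟶ S), IsSum a b := by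
  have := hB.pushouts
  exact ⟨_, _, _, IsPushout.of_hasPushout (initial.to A) (initial.to B)⟩

theorem isPullback_of_disjoint (hB : TypeB M) {A B Z : C} {a : A ⟶ Z} {b : B ⟶ Z}
    (h : DisjointArrows a b) : IsPullback (initial.to A) (initial.to B) a b := by
  have := hB.hasStrictInitialObjects
  refine ⟨⟨initial.hom_ext _ _⟩, ⟨PullbackCone.IsLimit.mk _
    (fun s => (h s.fst s.snd s.condition).some) ?_ ?_ ?_⟩⟩
  · intro s
    have := hB.strict_initial (h s.fst s.snd s.condition).some
    rw [← cancel_epi (inv (h s.fst s.snd s.condition).some)]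
    exact initial.hom_ext _ _
  · intro s
    have := hB.strict_initial (h s.fst s.snd s.condition).some
    rw [← cancel_epi (inv (h s.fst s.snd s.condition).some)]
    exact initial.hom_ext _ _
  · intro s l _ _
    exact initial.strict_hom_ext _ _

theorem isPullback_initial_s15 (hB : TypeB M) {A B : C} (f : A ⟶ B) :
    IsPullback (initial.to A) (𝟙 (⊥_ C)) f (initial.to B) := by
  have := hB.isPullback_of_disjoint (a := f) (b := initial.to B) fun U _ v _ => ⟨v⟩
  rwa [initial.hom_ext (initial.to (⊥_ C)) (𝟙 _)] at this

/-- Pushouts along arrows of `M` are pullbacks: apply the Van Kampen property to the cube whose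
top face is the trivial pushout of `f`. -/
theorem isPullback_of_isPushout (hB : TypeB M) {W X Y Z : C} {f : W ⟶ X} {m : W ⟶ Y}
    {n : X ⟶ Z} {g : Y ⟶ Z} (h : IsPushout f m n g) (hm : M m) : IsPullback f m n g := by
  have hA := hB.adhesive
  have := hA.mono m hm
  exact (((hA.van_kampen f m n g h hm).2 f (𝟙 W) (𝟙 X) f (𝟙 W) (𝟙 X) m n
    (by simp) h.w (by simp) (IsPullback.of_vert_isIso ⟨by simp⟩)
    (IsKernelPair.id_of_mono m) (hA.contains_iso _ inferInstance)
    (hA.contains_iso _ inferInstance) hm (hA.pushout_stable _ _ _ _ h hm)).1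
    (IsPushout.of_vert_isIso ⟨by simp⟩)).1

theorem isIso_of_epi (hB : TypeB M) {X Y : C} {m : X ⟶ Y} (hm : M m) [Epi m] : IsIso m := by
  have := hB.adhesive.mono m hm
  have h : IsPushout m m (𝟙 Y) (𝟙 Y) := by
    refine ⟨⟨rfl⟩, ⟨PushoutCocone.IsColimit.mk _ (fun s => s.inl) ?_ ?_ ?_⟩⟩
    · intro s; simp
    · intro s
      rw [← cancel_epi m]
      simpa using s.condition
    · intro s l h _
      simpa using h
  exact (hB.isPullback_of_isPushout h hm).isIso_fst_of_isIso

theorem inr_mem (hB : TypeB M) {A B S : C} {a : A ⟶ S} {b : B ⟶ S} (h : IsSum a b) : M b :=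
  hB.adhesive.pushout_stable _ _ _ _ h.flip (hB.initial_mem A)

theorem inl_mem (hB : TypeB M) {A B S : C} {a : A ⟶ S} {b : B ⟶ S} (h : IsSum a b) : M a :=
  hB.inr_mem h.flip

theorem disjoint_of_isSum (hB : TypeB M) {A B S : C} {a : A ⟶ S} {b : B ⟶ S}
    (h : IsSum a b) : DisjointArrows a b := fun _ u v w =>
  ⟨(hB.isPullback_of_isPushout h (hB.initial_mem B)).lift u v w⟩

theorem exists_complement_s15 (hB : TypeB M) {X Y : C} {m : X ⟶ Y} (hm : M m) :
    ∃ (X' : C) (m' : X' ⟶ Y), IsSum m m' := by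
  obtain ⟨X', m', h⟩ := hB.coproj m hm
  exact ⟨X', m', isSum_of_isColimit h⟩

/-- An arrow of `M` into a coproduct which is disjoint from one summand factors through the
other one: the pullback of the coproduct along `p` is a coproduct with an initial summand. -/
theorem factor (hB : TypeB M) {A B S P : C} {a : A ⟶ S} {b : B ⟶ S} (h : IsSum a b)
    {p : P ⟶ S} (hp : M p) (hd : DisjointArrows p a) : ∃ p' : P ⟶ B, M p' ∧ p' ≫ b = p := by
  have hA := hB.adhesive
  have hbM := hB.inr_mem h
  have := hA.has_pullback p b hbM
  have hpb := IsPullback.of_hasPullback p b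
  have hsnd : M (pullback.snd p b) := hA.pullback_stable _ _ _ _ hpb hp
  have := hA.mono _ (hB.initial_mem A)
  have hpo := (hB.stable _ _ _ _ h).2 (𝟙 (⊥_ C)) (initial.to (pullback p b)) (initial.to P)
    (pullback.fst p b) (𝟙 (⊥_ C)) (initial.to A) (pullback.snd p b) p
    (initial.hom_ext _ _) (IsKernelPair.id_of_mono _)
    (hB.isPullback_initial_s15 _)
    (hA.contains_iso _ inferInstance) (hB.initial_mem A) hsnd hp hpb
    (hB.isPullback_of_disjoint hd)
  have : IsIso (pullback.fst p b) := hpo.isIso_inr_of_isIso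
  refine ⟨inv (pullback.fst p b) ≫ pullback.snd p b,
    hA.comp_mem _ _ (hA.contains_iso _ inferInstance) hsnd, ?_⟩
  rw [Category.assoc, IsIso.inv_comp_eq]
  exact hpb.w.symm

/-- The copairing of two disjoint arrows of `M` is in `M`: the second arrow factors through the
complement `N` of the first by some `y'` in `M`, and the copairing is a pushout of `y'`. -/
theorem copair_mem (hB : TypeB M) {X Y T Z : C} {x : X ⟶ T} {y : Y ⟶ T} (h : IsSum x y)
    {t : T ⟶ Z} (hx : M (x ≫ t)) (hy : M (y ≫ t)) (hd : DisjointArrows (x ≫ t) (y ≫ t)) :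
    M t := by
  obtain ⟨N, n, hn⟩ := hB.exists_complement_s15 hx
  obtain ⟨y', hy', hyn⟩ := hB.factor hn hy hd.symm
  have hbig : IsPushout (initial.to Y ≫ y') (initial.to X) n (x ≫ t) := by
    rw [initial.hom_ext (initial.to Y ≫ y') (initial.to N)]
    exact hn.flip
  exact hB.adhesive.pushout_stable _ _ _ _ (hbig.of_left hyn h.flip).flip hy'

/-- Let `W` be the pushout of `q : Q ⟶ S` along itself, with fold map `p`.  If `i : B ⟶ S` is in
`M` and disjoint from `q`, then the part of `W` over `B` is `B + B`. -/
theorem part_of_double (hB : TypeB M) {Q S W B : C} {q : Q ⟶ S} {inl inr : S ⟶ W}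
    (hW : IsPushout q q inl inr) {p : W ⟶ S} (hl : inl ≫ p = 𝟙 S) (hr : inr ≫ p = 𝟙 S)
    {i : B ⟶ S} (hi : M i) (hd : DisjointArrows i q) :
    ∃ (V : C) (v : V ⟶ W) (π : V ⟶ B) (s t : B ⟶ V),
      M v ∧ v ≫ p = π ≫ i ∧ IsSum s t ∧ s ≫ v = i ≫ inl ∧ t ≫ v = i ≫ inr := by
  have hA := hB.adhesive
  have := hA.has_pullback p i hi
  have hpb := (IsPullback.of_hasPullback p i).flip
  have hv : M (pullback.fst p i) := hA.pullback_stable _ _ _ _ hpb hi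
  -- a section `j` of the fold map restricts over `B` to a section of the part over `B`
  have key : ∀ j : S ⟶ W, j ≫ p = 𝟙 S → ∃ s : B ⟶ pullback p i,
      IsPullback s i (pullback.fst p i) j := by
    intro j hj
    have hw : 𝟙 B ≫ i = (i ≫ j) ≫ p := by simp [hj]
    refine ⟨hpb.lift (𝟙 B) (i ≫ j) hw, IsPullback.of_right ?_ (hpb.lift_snd _ _ _) hpb⟩
    rw [hpb.lift_fst, hj]
    exact IsPullback.of_horiz_isIso ⟨by simp⟩
  obtain ⟨s, hs⟩ := key inl hl
  obtain ⟨t, ht⟩ := key inr hr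
  have hback := hB.isPullback_of_disjoint hd
  exact ⟨_, pullback.fst p i, pullback.snd p i, s, t, hv, pullback.condition,
    (hB.stable _ _ _ _ hW).2 (initial.to B) (initial.to B) s t (initial.to Q) i i
      (pullback.fst p i) (initial.hom_ext _ _) hback hback (hB.initial_mem Q) hi hi hv ht hs,
    hs.w, ht.w⟩

/-- An arrow into a coproduct which is disjoint from both summands has an initial source. -/
theorem no_third_part (hB : TypeB M) {B₀ B₁ S Q : C} {a : B₀ ⟶ S} {b : B₁ ⟶ S}
    (h : IsSum a b) {q : Q ⟶ S} (h₀ : DisjointArrows a q) (h₁ : DisjointArrows b q) :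
    Nonempty (Q ⟶ ⊥_ C) := by
  have := hB.pushouts
  have hW := IsPushout.of_hasPushout q q
  set inl := pushout.inl q q
  set inr := pushout.inr q q
  obtain ⟨p, hl, hr⟩ : ∃ p, inl ≫ p = 𝟙 S ∧ inr ≫ p = 𝟙 S :=
    ⟨hW.desc (𝟙 S) (𝟙 S) rfl, hW.inl_desc _ _ _, hW.inr_desc _ _ _⟩
  obtain ⟨V₀, v₀, π₀, s₀, t₀, hv₀, hp₀, hsum₀, hs₀, ht₀⟩ :=
    hB.part_of_double hW hl hr (hB.inl_mem h) h₀
  obtain ⟨V₁, v₁, π₁, s₁, t₁, hv₁, hp₁, hsum₁, hs₁, ht₁⟩ :=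
    hB.part_of_double hW hl hr (hB.inr_mem h) h₁
  obtain ⟨T, x, y, hT⟩ := hB.exists_isSum V₀ V₁
  obtain ⟨k, hx, hy⟩ := hT.exists_desc v₀ v₁
  have hkM : M k := by
    refine hB.copair_mem hT (hx ▸ hv₀) (hy ▸ hv₁) ?_
    intro U u v huv
    refine hB.disjoint_of_isSum h (u ≫ π₀) (v ≫ π₁) ?_
    rw [hx, hy] at huv
    rw [Category.assoc, Category.assoc, ← hp₀, ← hp₁, reassoc_of% huv]
  have hepi : Epi k := by
    refine ⟨fun α β hαβ => ?_⟩
    have e₀ : v₀ ≫ α = v₀ ≫ β := by rw [← hx, Category.assoc, hαβ, Category.assoc]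
    have e₁ : v₁ ≫ α = v₁ ≫ β := by rw [← hy, Category.assoc, hαβ, Category.assoc]
    refine hW.hom_ext (h.hom_ext ?_ ?_) (h.hom_ext ?_ ?_)
    · rw [← reassoc_of% hs₀, ← reassoc_of% hs₀, e₀]
    · rw [← reassoc_of% hs₁, ← reassoc_of% hs₁, e₁]
    · rw [← reassoc_of% ht₀, ← reassoc_of% ht₀, e₀]
    · rw [← reassoc_of% ht₁, ← reassoc_of% ht₁, e₁]
  have hk : IsIso k := hB.isIso_of_epi hkM
  -- the comparison `z : W ⟶ S + S`, defined through the isomorphism `k`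
  obtain ⟨D, d, d', hD⟩ := hB.exists_isSum S S
  obtain ⟨z₀, hz₀, hz₀'⟩ := hsum₀.exists_desc (a ≫ d) (a ≫ d')
  obtain ⟨z₁, hz₁, hz₁'⟩ := hsum₁.exists_desc (b ≫ d) (b ≫ d')
  obtain ⟨z', hz'₀, hz'₁⟩ := hT.exists_desc z₀ z₁
  obtain ⟨z, hz⟩ : ∃ z, k ≫ z = z' := ⟨inv k ≫ z', by simp⟩
  have hvz₀ : v₀ ≫ z = z₀ := by rw [← hx, Category.assoc, hz, hz'₀]
  have hvz₁ : v₁ ≫ z = z₁ := by rw [← hy, Category.assoc, hz, hz'₁]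
  have hzl : inl ≫ z = d := h.hom_ext
    (by rw [← reassoc_of% hs₀, hvz₀, hz₀]) (by rw [← reassoc_of% hs₁, hvz₁, hz₁])
  have hzr : inr ≫ z = d' := h.hom_ext
    (by rw [← reassoc_of% ht₀, hvz₀, hz₀']) (by rw [← reassoc_of% ht₁, hvz₁, hz₁'])
  refine hB.disjoint_of_isSum hD q q ?_
  rw [← hzl, ← hzr, reassoc_of% hW.w]

end TypeB

/-- Let `(X, M)` be a pair of type `B`, and suppose the square with top `f : A ⟶ B₀`,
left `m : A ⟶ C'` in `M`, right the coprojection `ιB₀ : B₀ ⟶ S` of a binary coproduct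
`(S, ιB₀, ιB₁)` of `B₀` and `B₁`, and bottom `g : C' ⟶ S`, is a pullback.  Then there
are an object `E`, an arrow `e : E ⟶ C'` in `M` and an arrow `φ : E ⟶ B₁` such that
`(C', m, e)` is a binary coproduct cocone and `g` is the induced arrow (that is,
`m ≫ g = f ≫ ιB₀` and `e ≫ g = φ ≫ ιB₁`).  Moreover, the square is a pushout if and
only if `φ` is an isomorphism. -/
theorem typeB_pullback_along_coprojection
    [HasInitial C] (M : MorphismProperty C) (hB : TypeB M)
    {A B₀ B₁ S C' : C}
    (ιB₀ : B₀ ⟶ S) (ιB₁ : B₁ ⟶ S)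
    (hS : Nonempty (IsColimit (BinaryCofan.mk ιB₀ ιB₁)))
    (f : A ⟶ B₀) (m : A ⟶ C') (g : C' ⟶ S)
    (hm : M m)
    (hpb : IsPullback f m ιB₀ g) :
    ∃ (E : C) (e : E ⟶ C') (φ : E ⟶ B₁),
      M e ∧
      Nonempty (IsColimit (BinaryCofan.mk m e)) ∧
      m ≫ g = f ≫ ιB₀ ∧
      e ≫ g = φ ≫ ιB₁ ∧
      (IsPushout f m ιB₀ g ↔ IsIso φ) := by
  have hA := hB.adhesive
  have hsum := isSum_of_isColimit hS
  have hι₁ : M ιB₁ := hB.inr_mem hsum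
  have := hA.mono _ hι₁
  obtain ⟨E, e, hE⟩ := hB.coproj m hm
  have hsumE := isSum_of_isColimit hE
  have he : M e := hB.inr_mem hsumE
  have := hA.mono _ he
  obtain ⟨φ, hφ⟩ : ∃ φ : E ⟶ B₁, e ≫ g = φ ≫ ιB₁ := by
    -- `P` is the part of `C'` over `B₁`; it is disjoint from `A`, hence contained in `E`
    have := hA.has_pullback g ιB₁ hι₁
    have hP := (IsPullback.of_hasPullback g ιB₁).flip
    set P := pullback g ιB₁
    set r := pullback.fst g ιB₁
    set π := pullback.snd g ιB₁
    have hrM : M r := hA.pullback_stable _ _ _ _ hP hι₁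
    obtain ⟨r', hr'M, hr'⟩ := hB.factor hsumE hrM (by
      intro U u v huv
      refine hB.disjoint_of_isSum hsum (v ≫ f) (u ≫ π) ?_
      rw [Category.assoc, Category.assoc, hpb.w, hP.w, reassoc_of% huv])
    -- the complement `Q` of `P` in `E` misses both summands of `S`
    obtain ⟨Q, s, hQ⟩ := hB.exists_complement_s15 hr'M
    obtain ⟨o⟩ : Nonempty (Q ⟶ ⊥_ C) := by
      refine hB.no_third_part hsum (q := s ≫ e ≫ g) ?_ ?_
      · intro U u v huv
        refine hB.disjoint_of_isSum hsumE (hpb.lift u (v ≫ s ≫ e) (by simpa using huv)) (v ≫ s) ?_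
        rw [hpb.lift_snd, Category.assoc]
      · intro U u v huv
        refine hB.disjoint_of_isSum hQ (hP.lift u (v ≫ s ≫ e) (by simpa using huv)) v ?_
        rw [← cancel_mono e, Category.assoc, hr', hP.lift_snd, Category.assoc]
    have := hB.strict_initial o
    have : IsIso (initial.to Q) := by
      rw [initial.hom_ext (initial.to Q) (inv o)]
      infer_instance
    have : IsIso r' := hQ.isIso_inl_of_isIso
    refine ⟨inv r' ≫ π, ?_⟩
    rw [Category.assoc, hP.w, ← hr', Category.assoc, IsIso.inv_hom_id_assoc]
  refine ⟨E, e, φ, he, hE, hpb.w.symm, hφ, ?_⟩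
  -- by pasting, the square is a pushout iff `S` is the coproduct of `B₀` and `E`
  have hiff : IsPushout f m ιB₀ g ↔ IsSum ιB₀ (e ≫ g) := by
    rw [← IsPushout.paste_horiz_iff hsumE hpb.w,
      initial.hom_ext (initial.to A ≫ f) (initial.to B₀)]
  rw [hiff]
  constructor
  · intro h
    obtain ⟨ψ, -, hψ⟩ := hB.factor h hι₁ (hB.disjoint_of_isSum hsum).symm
    have := hA.mono _ (hB.inr_mem h)
    refine ⟨ψ, ?_, ?_⟩
    · rw [← cancel_mono (e ≫ g), Category.assoc, hψ, hφ, Category.id_comp]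
    · rw [← cancel_mono ιB₁, Category.assoc, ← hφ, hψ, Category.id_comp]
  · intro _
    rw [hφ]
    have h : IsPushout (𝟙 (⊥_ C)) (initial.to E) (initial.to B₁) φ :=
      IsPushout.of_horiz_isIso ⟨initial.hom_ext _ _⟩
    have h' := h.paste_horiz hsum
    rwa [Category.id_comp] at h'
end
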